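/- arXiv:1403.6252 — 3 statements merged into one kernel-verified Lean document; each statement's English description precedes it below -/
import Mathlib

section
/- For any fixed real numbers J_X and J_Y there exists a constant C > 0, depending only on the solution and on J_X, J_Y, such that for all R ≥ R₀ and θ ∈ ℝ: | (R^{−2} A(R,θ)² e^{2U(R,θ)} + e^{−2U(R,θ)}) J_X − A(R,θ) e^{2U(R,θ)} R^{−2} J_Y | ≤ C e^{C R^{1/2}} and | −A(R,θ) e^{2U(R,θ)} R^{−2} J_X + R^{−2} e^{2U(R,θ)} J_Y | ≤ C e^{C R^{1/2}}. -/
open Real MeasureTheory Set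

/-- Partial derivative with respect to the first (time) variable `R`. -/
noncomputable def pdR (f : ℝ → ℝ → ℝ) (R θ : ℝ) : ℝ := deriv (fun r => f r θ) R

/-- Partial derivative with respect to the second (space) variable `θ`. -/
noncomputable def pdT (f : ℝ → ℝ → ℝ) (R θ : ℝ) : ℝ := deriv (fun t => f R t) θ

/-- Joint smoothness of a function of two real variables. -/
def Sm (f : ℝ → ℝ → ℝ) : Prop := ContDiff ℝ (⊤ : ℕ∞) (fun p : ℝ × ℝ => f p.1 p.2)

namespace Sm

lemma add {f g : ℝ → ℝ → ℝ} (hf : Sm f) (hg : Sm g) : Sm (fun R t => f R t + g R t) :=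
  ContDiff.add hf hg
lemma sub {f g : ℝ → ℝ → ℝ} (hf : Sm f) (hg : Sm g) : Sm (fun R t => f R t - g R t) :=
  ContDiff.sub hf hg
lemma mul {f g : ℝ → ℝ → ℝ} (hf : Sm f) (hg : Sm g) : Sm (fun R t => f R t * g R t) :=
  ContDiff.mul hf hg
lemma exp {f : ℝ → ℝ → ℝ} (hf : Sm f) : Sm (fun R t => Real.exp (f R t)) :=
  ContDiff.exp hf
lemma log {f : ℝ → ℝ → ℝ} (hf : Sm f) (h : ∀ R t, f R t ≠ 0) : Sm (fun R t => Real.log (f R t)) :=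
  ContDiff.log hf (fun p => h p.1 p.2)
lemma neg {f : ℝ → ℝ → ℝ} (hf : Sm f) : Sm (fun R t => - f R t) :=
  ContDiff.neg hf
lemma const (c : ℝ) : Sm (fun _ _ => c) := contDiff_const

lemma cont {f : ℝ → ℝ → ℝ} (hf : Sm f) : Continuous (fun p : ℝ × ℝ => f p.1 p.2) :=
  ContDiff.continuous hf
lemma contT {f : ℝ → ℝ → ℝ} (hf : Sm f) (R : ℝ) : Continuous (f R) :=
  hf.cont.comp (Continuous.prodMk_right R)

lemma ii {f : ℝ → ℝ → ℝ} (hf : Sm f) (R a b : ℝ) : IntervalIntegrable (f R) volume a b :=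
  (hf.contT R).intervalIntegrable a b

lemma hasFD {f : ℝ → ℝ → ℝ} (hf : Sm f) (R t : ℝ) :
    HasFDerivAt (fun p : ℝ × ℝ => f p.1 p.2) (fderiv ℝ (fun p : ℝ × ℝ => f p.1 p.2) (R, t)) (R, t) :=
  (ContDiff.differentiable hf (by simp) _).hasFDerivAt

lemma hasR' {f : ℝ → ℝ → ℝ} (hf : Sm f) (R t : ℝ) :
    HasDerivAt (fun r => f r t) (fderiv ℝ (fun p : ℝ × ℝ => f p.1 p.2) (R, t) (1, 0)) R := by
  have h1 : HasDerivAt (fun r : ℝ => (r, t)) ((1 : ℝ), (0 : ℝ)) R :=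
    (hasDerivAt_id R).prodMk (hasDerivAt_const R t)
  exact (hf.hasFD R t).comp_hasDerivAt R h1

lemma hasT' {f : ℝ → ℝ → ℝ} (hf : Sm f) (R t : ℝ) :
    HasDerivAt (fun s => f R s) (fderiv ℝ (fun p : ℝ × ℝ => f p.1 p.2) (R, t) (0, 1)) t := by
  have h1 : HasDerivAt (fun s : ℝ => (R, s)) ((0 : ℝ), (1 : ℝ)) t :=
    (hasDerivAt_const t R).prodMk (hasDerivAt_id t)
  exact (hf.hasFD R t).comp_hasDerivAt t h1

lemma pdR_eq {f : ℝ → ℝ → ℝ} (hf : Sm f) (R t : ℝ) :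
    pdR f R t = fderiv ℝ (fun p : ℝ × ℝ => f p.1 p.2) (R, t) (1, 0) := (hf.hasR' R t).deriv
lemma pdT_eq {f : ℝ → ℝ → ℝ} (hf : Sm f) (R t : ℝ) :
    pdT f R t = fderiv ℝ (fun p : ℝ × ℝ => f p.1 p.2) (R, t) (0, 1) := (hf.hasT' R t).deriv

lemma hasR {f : ℝ → ℝ → ℝ} (hf : Sm f) (R t : ℝ) :
    HasDerivAt (fun r => f r t) (pdR f R t) R := by
  rw [hf.pdR_eq]; exact hf.hasR' R t
lemma hasT {f : ℝ → ℝ → ℝ} (hf : Sm f) (R t : ℝ) :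
    HasDerivAt (fun s => f R s) (pdT f R t) t := by
  rw [hf.pdT_eq]; exact hf.hasT' R t

lemma fd {f : ℝ → ℝ → ℝ} (hf : Sm f) :
    ContDiff ℝ (⊤ : ℕ∞) (fderiv ℝ (fun p : ℝ × ℝ => f p.1 p.2)) :=
  ContDiff.fderiv_right hf (by simp)

lemma dR {f : ℝ → ℝ → ℝ} (hf : Sm f) : Sm (pdR f) := by
  have : ContDiff ℝ (⊤ : ℕ∞) (fun p : ℝ × ℝ =>
      fderiv ℝ (fun p : ℝ × ℝ => f p.1 p.2) p ((1 : ℝ), (0 : ℝ))) := hf.fd.clm_apply contDiff_const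
  unfold Sm
  convert this using 2 with p
  exact hf.pdR_eq _ _
lemma dT {f : ℝ → ℝ → ℝ} (hf : Sm f) : Sm (pdT f) := by
  have : ContDiff ℝ (⊤ : ℕ∞) (fun p : ℝ × ℝ =>
      fderiv ℝ (fun p : ℝ × ℝ => f p.1 p.2) p ((0 : ℝ), (1 : ℝ))) := hf.fd.clm_apply contDiff_const
  unfold Sm
  convert this using 2 with p
  exact hf.pdT_eq _ _

lemma comm {f : ℝ → ℝ → ℝ} (hf : Sm f) (R t : ℝ) : pdR (pdT f) R t = pdT (pdR f) R t := by
  rw [hf.dT.pdR_eq, hf.dR.pdT_eq]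
  have e1 : (fun p : ℝ × ℝ => pdT f p.1 p.2) = fun p : ℝ × ℝ =>
      fderiv ℝ (fun p : ℝ × ℝ => f p.1 p.2) p ((0 : ℝ), (1 : ℝ)) := by
    funext p; exact hf.pdT_eq _ _
  have e2 : (fun p : ℝ × ℝ => pdR f p.1 p.2) = fun p : ℝ × ℝ =>
      fderiv ℝ (fun p : ℝ × ℝ => f p.1 p.2) p ((1 : ℝ), (0 : ℝ)) := by
    funext p; exact hf.pdR_eq _ _
  have hd : DifferentiableAt ℝ (fderiv ℝ (fun p : ℝ × ℝ => f p.1 p.2)) (R, t) :=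
    hf.fd.differentiable (by simp) _
  rw [e1, e2, fderiv_clm_apply hd (differentiableAt_const _),
    fderiv_clm_apply hd (differentiableAt_const _)]
  have hs : IsSymmSndFDerivAt ℝ (fun p : ℝ × ℝ => f p.1 p.2) (R, t) := by
    apply ContDiffAt.isSymmSndFDerivAt (n := (⊤ : ℕ∞)) (ContDiff.contDiffAt hf)
    rw [minSmoothness_of_isRCLikeNormedField]
    exact WithTop.coe_le_coe.2 (le_top : (2 : ℕ∞) ≤ ⊤)
  simpa using hs (1, 0) (0, 1)

end Sm

/-- Integral over the circle. -/
noncomputable def II (f : ℝ → ℝ → ℝ) (R : ℝ) : ℝ := ∫ t in (0 : ℝ)..(2 * π), f R t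

lemma II_hasDeriv {f : ℝ → ℝ → ℝ} (hf : Sm f) (R : ℝ) : HasDerivAt (II f) (II (pdR f) R) R := by
  obtain ⟨M, hM⟩ := ((isCompact_Icc (a := R - 1) (b := R + 1)).prod
    (isCompact_Icc (a := (0 : ℝ)) (b := 2 * π))).exists_bound_of_continuousOn hf.dR.cont.continuousOn
  have hs : Metric.ball R 1 ∈ nhds R := Metric.ball_mem_nhds R one_pos
  refine (intervalIntegral.hasDerivAt_integral_of_dominated_loc_of_deriv_le (bound := fun _ => M)
    (F := f) (F' := pdR f) hs ?_ (hf.ii _ _ _) ?_ ?_ ?_ ?_).2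
  · exact Filter.Eventually.of_forall fun r => (hf.contT r).aestronglyMeasurable
  · exact (hf.dR.contT R).aestronglyMeasurable
  · refine Filter.Eventually.of_forall fun t ht x hx => ?_
    rw [uIoc_of_le (by positivity)] at ht
    rw [Metric.mem_ball, Real.dist_eq, abs_lt] at hx
    exact hM (x, t) ⟨⟨by linarith, by linarith⟩, ⟨ht.1.le, ht.2⟩⟩
  · exact intervalIntegrable_const
  · exact Filter.Eventually.of_forall fun t _ x _ => hf.hasR x t

lemma II_pdT {f : ℝ → ℝ → ℝ} (hf : Sm f) (R : ℝ) (hp : f R (2 * π) = f R 0) :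
    II (pdT f) R = 0 := by
  unfold II
  rw [intervalIntegral.integral_eq_sub_of_hasDerivAt (f := f R) (fun t _ => hf.hasT R t)
    (hf.dT.ii _ _ _), hp, sub_self]

lemma II_add {f g : ℝ → ℝ → ℝ} (hf : Sm f) (hg : Sm g) (R : ℝ) :
    II (fun R t => f R t + g R t) R = II f R + II g R :=
  intervalIntegral.integral_add (hf.ii _ _ _) (hg.ii _ _ _)
lemma II_sub {f g : ℝ → ℝ → ℝ} (hf : Sm f) (hg : Sm g) (R : ℝ) :
    II (fun R t => f R t - g R t) R = II f R - II g R :=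
  intervalIntegral.integral_sub (hf.ii _ _ _) (hg.ii _ _ _)

lemma pd_periodic {f : ℝ → ℝ → ℝ} (hp : ∀ R t, f R (t + 2 * π) = f R t) (R t : ℝ) :
    pdR f R (t + 2 * π) = pdR f R t ∧ pdT f R (t + 2 * π) = pdT f R t := by
  constructor
  · unfold pdR; simp only [hp]
  · unfold pdT
    rw [← deriv_comp_add_const]
    simp only [hp]

lemma var_le {f f' h : ℝ → ℝ} (hd : ∀ t, HasDerivAt f (f' t) t) (hc : Continuous f')
    (hh : Continuous h) (hb : ∀ t, |f' t| ≤ h t) {x y : ℝ} (hx : x ∈ Icc 0 (2 * π))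
    (hy : y ∈ Icc 0 (2 * π)) : f x - f y ≤ ∫ t in (0 : ℝ)..(2 * π), h t := by
  rw [← intervalIntegral.integral_eq_sub_of_hasDerivAt (fun t _ => hd t)
    (hc.intervalIntegrable _ _)]
  have h0 : ∀ t, 0 ≤ h t := fun t => (abs_nonneg _).trans (hb t)
  calc ∫ t in y..x, f' t ≤ ‖∫ t in y..x, f' t‖ := le_abs_self _
    _ ≤ ∫ t in uIoc y x, ‖f' t‖ := intervalIntegral.norm_integral_le_integral_norm_uIoc
    _ ≤ ∫ t in uIoc y x, h t := by
        apply setIntegral_mono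
        · exact (hc.norm.intervalIntegrable y x).def'
        · exact (hh.intervalIntegrable y x).def'
        · exact hb
    _ ≤ ∫ t in Ioc 0 (2 * π), h t := by
        apply setIntegral_mono_set
        · exact ((hh.intervalIntegrable 0 (2 * π)).1)
        · exact Filter.Eventually.of_forall h0
        · apply LE.le.eventuallyLE
          intro s hs
          rw [mem_uIoc] at hs
          rcases hs with hs | hs
          · exact ⟨lt_of_le_of_lt hy.1 hs.1, hs.2.trans hx.2⟩
          · exact ⟨lt_of_le_of_lt hx.1 hs.1, hs.2.trans hy.2⟩
    _ = _ := by rw [intervalIntegral.integral_of_le (by positivity)]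

lemma cs_int {f : ℝ → ℝ} (hc : Continuous f) :
    (∫ t in (0 : ℝ)..(2 * π), f t) ^ 2 ≤ 2 * π * ∫ t in (0 : ℝ)..(2 * π), f t ^ 2 := by
  set I := ∫ t in (0 : ℝ)..(2 * π), f t with hI
  have h : 0 ≤ ∫ t in (0 : ℝ)..(2 * π), (f t - I / (2 * π)) ^ 2 :=
    intervalIntegral.integral_nonneg (by positivity) fun t _ => sq_nonneg _
  have e : ∫ t in (0 : ℝ)..(2 * π), (f t - I / (2 * π)) ^ 2
      = (∫ t in (0 : ℝ)..(2 * π), f t ^ 2) - (I / π) * I + 2 * π * (I / (2 * π)) ^ 2 := by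
    have : ∀ t, (f t - I / (2 * π)) ^ 2 = f t ^ 2 - (I / π) * f t + (I / (2 * π)) ^ 2 := by
      intro t; field_simp; ring
    simp only [this]
    rw [intervalIntegral.integral_add, intervalIntegral.integral_sub,
      intervalIntegral.integral_const_mul, ← hI]
    · simp
    all_goals exact Continuous.intervalIntegrable (by fun_prop) _ _
  rw [e] at h
  have hp := pi_pos
  have : 2 * π * ((∫ t in (0 : ℝ)..(2 * π), f t ^ 2) - (I / π) * I + 2 * π * (I / (2 * π)) ^ 2)
    = 2 * π * (∫ t in (0 : ℝ)..(2 * π), f t ^ 2) - I ^ 2 := by field_simp; ring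
  nlinarith [mul_nonneg (by positivity : 0 ≤ 2 * π) h]

/-- The bilinear form (minus the Minkowski product in null coordinates). -/
noncomputable def bb (a b c x y z : ℝ) : ℝ := (a * y + b * x) / 2 - c * z

lemma bb_one_le {u v w x y z : ℝ} (hu : 0 < u) (hx : 0 < x) (h1 : u * v - w ^ 2 = 1)
    (h2 : x * y - z ^ 2 = 1) : 1 ≤ bb u v w x y z := by
  unfold bb
  have e : ((u * y + v * x) / 2 - w * z - 1) * (2 * u * x)
      = (u - x) ^ 2 + (u * z - w * x) ^ 2 := by
    linear_combination u ^ 2 * h2 + x ^ 2 * h1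
  by_contra hlt
  push Not at hlt
  have : ((u * y + v * x) / 2 - w * z - 1) * (2 * u * x) < 0 :=
    mul_neg_of_neg_of_pos (by linarith) (by positivity)
  nlinarith [sq_nonneg (u - x), sq_nonneg (u * z - w * x)]

lemma tan_nonneg {u v w a b c : ℝ} (hu : 0 < u) (h1 : u * v - w ^ 2 = 1)
    (ht : a * v + b * u - 2 * c * w = 0) : 0 ≤ c ^ 2 - a * b := by
  have e : (c ^ 2 - a * b) * u ^ 2 = (u * c - a * w) ^ 2 + a ^ 2 := by
    linear_combination (-a * u) * ht + a ^ 2 * h1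
  by_contra hlt
  push Not at hlt
  have : (c ^ 2 - a * b) * u ^ 2 < 0 := mul_neg_of_neg_of_pos hlt (by positivity)
  nlinarith [sq_nonneg (u * c - a * w), sq_nonneg a]

lemma tan_cs {u v w a b c x y z : ℝ} (h1 : u * v - w ^ 2 = 1)
    (ht : a * v + b * u - 2 * c * w = 0) (h2 : x * y - z ^ 2 = 1) :
    (bb a b c x y z) ^ 2 ≤ (c ^ 2 - a * b) * ((bb u v w x y z) ^ 2 - 1) := by
  have gram : (c ^ 2 - a * b) * ((bb u v w x y z) ^ 2 - (u * v - w ^ 2) * (x * y - z ^ 2))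
      - (bb a b c x y z) ^ 2 * (u * v - w ^ 2)
      + bb a b c u v w * (2 * bb a b c x y z * bb u v w x y z
        - bb a b c u v w * (x * y - z ^ 2))
      = (u * (y * c - z * b) - v * (x * c - z * a) + w * (x * b - y * a)) ^ 2 / 4 := by
    unfold bb; ring
  have h0 : bb a b c u v w = 0 := by unfold bb; linarith
  rw [h1, h2, h0] at gram
  nlinarith [sq_nonneg (u * (y * c - z * b) - v * (x * c - z * a) + w * (x * b - y * a))]

lemma any_ge {x y z a b c : ℝ} (hx : 0 < x) (h2 : x * y - z ^ 2 = 1) :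
    - (bb a b c x y z) ^ 2 ≤ c ^ 2 - a * b := by
  set s := bb a b c x y z with hs
  have := tan_nonneg (a := a - s * x) (b := b - s * y) (c := c - s * z) hx h2 (by
    have : 2 * s = a * y + b * x - 2 * c * z := by rw [hs]; unfold bb; ring
    linear_combination (-2 * s) * h2 - this)
  have h3 : 2 * s = a * y + b * x - 2 * c * z := by rw [hs]; unfold bb; ring
  have e : (c - s * z) ^ 2 - (a - s * x) * (b - s * y) = c ^ 2 - a * b + s ^ 2 := by
    linear_combination (-s) * h3 - s ^ 2 * h2
  linarith

/-- Energy densities. -/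
noncomputable def kk (u v w : ℝ → ℝ → ℝ) (R t : ℝ) : ℝ :=
  pdR w R t * pdR w R t - pdR u R t * pdR v R t
/-- Spatial energy density. -/
noncomputable def zz (u v w : ℝ → ℝ → ℝ) (R t : ℝ) : ℝ :=
  pdT w R t * pdT w R t - pdT u R t * pdT v R t

/-- Wave maps into the hyperbolic plane, in null coordinates. -/
structure Sol (R₀ : ℝ) (u v w : ℝ → ℝ → ℝ) : Prop where
  su : Sm u
  sv : Sm v
  sw : Sm w
  pu : ∀ R t, u R (t + 2 * π) = u R t
  pv : ∀ R t, v R (t + 2 * π) = v R t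
  pw : ∀ R t, w R (t + 2 * π) = w R t
  pos : ∀ R t, 0 < u R t
  unit : ∀ R t, u R t * v R t - w R t ^ 2 = 1
  eu : ∀ R, R₀ ≤ R → ∀ t, pdR (pdR u) R t =
    pdT (pdT u) R t - R⁻¹ * pdR u R t + (kk u v w R t - zz u v w R t) * u R t
  ev : ∀ R, R₀ ≤ R → ∀ t, pdR (pdR v) R t =
    pdT (pdT v) R t - R⁻¹ * pdR v R t + (kk u v w R t - zz u v w R t) * v R t
  ew : ∀ R, R₀ ≤ R → ∀ t, pdR (pdR w) R t =
    pdT (pdT w) R t - R⁻¹ * pdR w R t + (kk u v w R t - zz u v w R t) * w R t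

namespace Sol

variable {R₀ : ℝ} {u v w : ℝ → ℝ → ℝ}

lemma sk (S : Sol R₀ u v w) : Sm (kk u v w) :=
  (S.sw.dR.mul S.sw.dR).sub (S.su.dR.mul S.sv.dR)
lemma sz (S : Sol R₀ u v w) : Sm (zz u v w) :=
  (S.sw.dT.mul S.sw.dT).sub (S.su.dT.mul S.sv.dT)

lemma tanR (S : Sol R₀ u v w) (R t : ℝ) :
    pdR u R t * v R t + pdR v R t * u R t - 2 * pdR w R t * w R t = 0 := by
  have h := (((S.su.hasR R t).mul (S.sv.hasR R t)).sub ((S.sw.hasR R t).pow 2))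
  have h2 : HasDerivAt (fun r => u r t * v r t - w r t ^ 2) 0 R := by
    simp only [S.unit]; exact hasDerivAt_const R 1
  have := h.unique h2
  simp at this
  linarith
lemma tanT (S : Sol R₀ u v w) (R t : ℝ) :
    pdT u R t * v R t + pdT v R t * u R t - 2 * pdT w R t * w R t = 0 := by
  have h := (((S.su.hasT R t).mul (S.sv.hasT R t)).sub ((S.sw.hasT R t).pow 2))
  have h2 : HasDerivAt (fun r => u R r * v R r - w R r ^ 2) 0 t := by
    simp only [S.unit]; exact hasDerivAt_const t 1
  have := h.unique h2
  simp at this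
  linarith

lemma k0 (S : Sol R₀ u v w) (R t : ℝ) : 0 ≤ kk u v w R t := by
  have := tan_nonneg (S.pos R t) (S.unit R t) (S.tanR R t)
  unfold kk; linarith
lemma z0 (S : Sol R₀ u v w) (R t : ℝ) : 0 ≤ zz u v w R t := by
  have := tan_nonneg (S.pos R t) (S.unit R t) (S.tanT R t)
  unfold zz; linarith

lemma csR (S : Sol R₀ u v w) (R t : ℝ) {x y z : ℝ} (h : x * y - z ^ 2 = 1) :
    (bb (pdR u R t) (pdR v R t) (pdR w R t) x y z) ^ 2 ≤
      kk u v w R t * ((bb (u R t) (v R t) (w R t) x y z) ^ 2 - 1) := by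
  have := tan_cs (S.unit R t) (S.tanR R t) h
  unfold kk; linarith
lemma csT (S : Sol R₀ u v w) (R t : ℝ) {x y z : ℝ} (h : x * y - z ^ 2 = 1) :
    (bb (pdT u R t) (pdT v R t) (pdT w R t) x y z) ^ 2 ≤
      zz u v w R t * ((bb (u R t) (v R t) (w R t) x y z) ^ 2 - 1) := by
  have := tan_cs (S.unit R t) (S.tanT R t) h
  unfold zz; linarith

lemma K0 (S : Sol R₀ u v w) (R : ℝ) : 0 ≤ II (kk u v w) R :=
  intervalIntegral.integral_nonneg (by positivity) fun t _ => S.k0 R t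
lemma Z0 (S : Sol R₀ u v w) (R : ℝ) : 0 ≤ II (zz u v w) R :=
  intervalIntegral.integral_nonneg (by positivity) fun t _ => S.z0 R t

/-- Energy identity. -/
lemma dE (S : Sol R₀ u v w) {R : ℝ} (hR : R₀ ≤ R) :
    HasDerivAt (fun R => II (kk u v w) R + II (zz u v w) R)
      (- 2 * R⁻¹ * II (kk u v w) R) R := by
  have h := (II_hasDeriv S.sk R).add (II_hasDeriv S.sz R)
  refine h.congr_deriv ?_
  rw [← II_add S.sk.dR S.sz.dR]
  -- the flux
  set q : ℝ → ℝ → ℝ := fun R t => 2 * (pdR w R t * pdT w R t)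
    - (pdR u R t * pdT v R t + pdR v R t * pdT u R t) with hq
  have sq : Sm q := ((Sm.const 2).mul (S.sw.dR.mul S.sw.dT)).sub
    ((S.su.dR.mul S.sv.dT).add (S.sv.dR.mul S.su.dT))
  have hper : q R (2 * π) = q R 0 := by
    have h1 := pd_periodic S.pu R 0
    have h2 := pd_periodic S.pv R 0
    have h3 := pd_periodic S.pw R 0
    simp only [zero_add] at h1 h2 h3
    simp only [hq, h1, h2, h3]
  have hz := II_pdT sq R hper
  have key : ∀ t, pdR (kk u v w) R t + pdR (zz u v w) R t
      = pdT q R t - 2 * R⁻¹ * kk u v w R t := by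
    intro t
    have e1 : pdR (kk u v w) R t = 2 * pdR w R t * pdR (pdR w) R t
        - (pdR (pdR u) R t * pdR v R t + pdR u R t * pdR (pdR v) R t) := by
      have := (((S.sw.dR.hasR R t).mul (S.sw.dR.hasR R t)).sub
        ((S.su.dR.hasR R t).mul (S.sv.dR.hasR R t)))
      refine (this.congr_deriv ?_).deriv
      ring
    have e2 : pdR (zz u v w) R t = 2 * pdT w R t * pdR (pdT w) R t
        - (pdR (pdT u) R t * pdT v R t + pdT u R t * pdR (pdT v) R t) := by
      have := (((S.sw.dT.hasR R t).mul (S.sw.dT.hasR R t)).sub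
        ((S.su.dT.hasR R t).mul (S.sv.dT.hasR R t)))
      refine (this.congr_deriv ?_).deriv
      ring
    have e3 : pdT q R t = 2 * (pdT (pdR w) R t * pdT w R t + pdR w R t * pdT (pdT w) R t)
        - (pdT (pdR u) R t * pdT v R t + pdR u R t * pdT (pdT v) R t
          + (pdT (pdR v) R t * pdT u R t + pdR v R t * pdT (pdT u) R t)) := by
      have := ((((S.sw.dR.hasT R t).mul (S.sw.dT.hasT R t)).const_mul 2).sub
        (((S.su.dR.hasT R t).mul (S.sv.dT.hasT R t)).add
        ((S.sv.dR.hasT R t).mul (S.su.dT.hasT R t))))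
      exact this.deriv
    rw [e1, e2, e3, S.su.comm, S.sv.comm, S.sw.comm, S.eu R hR, S.ev R hR, S.ew R hR]
    have ht := S.tanR R t
    generalize he : kk u v w R t - zz u v w R t = e
    unfold kk
    linear_combination (-e) * ht
  have : II (fun R t => pdR (kk u v w) R t + pdR (zz u v w) R t) R
      = ∫ t in (0 : ℝ)..(2 * π), (pdT q R t - 2 * R⁻¹ * kk u v w R t) := by
    unfold II; simp only [key]
  rw [this, intervalIntegral.integral_sub (sq.dT.ii _ _ _) ((S.sk.ii _ _ _).const_mul _),
    intervalIntegral.integral_const_mul]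
  unfold II at hz
  rw [hz]
  unfold II; ring

/-- Spatial oscillation of the logarithm of the distance-like function. -/
lemma log_osc (S : Sol R₀ u v w) (R : ℝ) {x y z : ℝ} (hx : 0 < x) (h : x * y - z ^ 2 = 1)
    {s t : ℝ} (hs : s ∈ Icc 0 (2 * π)) (ht : t ∈ Icc 0 (2 * π)) :
    Real.log (bb (u R s) (v R s) (w R s) x y z) - Real.log (bb (u R t) (v R t) (w R t) x y z)
      ≤ π + II (zz u v w) R / 2 := by
  have hc : ∀ t, 1 ≤ bb (u R t) (v R t) (w R t) x y z := fun t =>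
    bb_one_le (S.pos R t) hx (S.unit R t) h
  have hd : ∀ t, HasDerivAt (fun t => bb (u R t) (v R t) (w R t) x y z)
      (bb (pdT u R t) (pdT v R t) (pdT w R t) x y z) t := fun t =>
    ((((S.su.hasT R t).mul_const y).add ((S.sv.hasT R t).mul_const x)).div_const 2).sub
      ((S.sw.hasT R t).mul_const z)
  have cu := S.su.contT R
  have cv := S.sv.contT R
  have cw := S.sw.contT R
  have cu' := S.su.dT.contT R
  have cv' := S.sv.dT.contT R
  have cw' := S.sw.dT.contT R
  have cz := S.sz.contT R
  have := var_le (f := fun t => Real.log (bb (u R t) (v R t) (w R t) x y z))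
    (f' := fun t => (bb (pdT u R t) (pdT v R t) (pdT w R t) x y z)
      / (bb (u R t) (v R t) (w R t) x y z)) (h := fun t => 1 / 2 + zz u v w R t * (1 / 2))
    (fun t => (hd t).log (by linarith [hc t]))
    (by
      refine Continuous.div ?_ ?_ (fun t => by linarith [hc t])
      · unfold bb; fun_prop
      · unfold bb; fun_prop)
    (by fun_prop) ?_ hs ht
  · refine this.trans (le_of_eq ?_)
    rw [intervalIntegral.integral_add (by simp) ((S.sz.ii _ _ _).mul_const _),
      intervalIntegral.integral_mul_const]
    unfold II
    simp
    ring
  · intro t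
    have hc := hc t
    have h1 := S.csT R t h
    have hz := S.z0 R t
    rw [abs_div, abs_of_pos (by linarith : 0 < bb (u R t) (v R t) (w R t) x y z),
      div_le_iff₀ (by linarith)]
    apply abs_le_of_sq_le_sq _ (by positivity)
    set c := bb (u R t) (v R t) (w R t) x y z
    set ζ := zz u v w R t
    have : (1 / 2 + ζ * (1 / 2)) ^ 2 - ζ = ((1 - ζ) / 2) ^ 2 := by ring
    nlinarith [mul_nonneg (sq_nonneg ((1 - ζ) / 2)) (sq_nonneg c)]

/-- Oscillation estimate. -/
lemma osc (S : Sol R₀ u v w) (R E0 : ℝ) (hE : II (zz u v w) R ≤ E0) {s t : ℝ}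
    (hs : s ∈ Icc 0 (2 * π)) (ht : t ∈ Icc 0 (2 * π)) :
    bb (u R s) (v R s) (w R s) (u R t) (v R t) (w R t)
      ≤ 1 + 2 * π * (Real.exp (π + E0 / 2) + 1) * II (zz u v w) R := by
  have hx := S.pos R t
  have h := S.unit R t
  set x := u R t with hxx
  set y := v R t with hyy
  set z := w R t with hzz
  have h0 : bb (u R t) (v R t) (w R t) x y z = 1 := by
    rw [← hxx, ← hyy, ← hzz]; unfold bb; linarith
  have hc : ∀ t, 1 ≤ bb (u R t) (v R t) (w R t) x y z := fun t =>
    bb_one_le (S.pos R t) hx (S.unit R t) h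
  have hd : ∀ t, HasDerivAt (fun t => bb (u R t) (v R t) (w R t) x y z)
      (bb (pdT u R t) (pdT v R t) (pdT w R t) x y z) t := fun t =>
    ((((S.su.hasT R t).mul_const y).add ((S.sv.hasT R t).mul_const x)).div_const 2).sub
      ((S.sw.hasT R t).mul_const z)
  have cu := S.su.contT R
  have cv := S.sv.contT R
  have cw := S.sw.contT R
  have cu' := S.su.dT.contT R
  have cv' := S.sv.dT.contT R
  have cw' := S.sw.dT.contT R
  have cz := S.sz.contT R
  -- global bound (periodicity)
  have hper : Function.Periodic (fun t => bb (u R t) (v R t) (w R t) x y z) (2 * π) := by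
    intro t; simp only [S.pu, S.pv, S.pw]
  set C := Real.exp (π + E0 / 2) with hC
  have hbd : ∀ s ∈ Icc 0 (2 * π), bb (u R s) (v R s) (w R s) x y z ≤ C := by
    intro s hs
    have := S.log_osc R hx h hs ht
    rw [h0, Real.log_one, sub_zero] at this
    rw [hC, ← Real.log_le_iff_le_exp (by linarith [hc s])]
    linarith
  obtain ⟨m, hm, hmax⟩ := isCompact_Icc.exists_isMaxOn (s := Icc 0 (2 * π)) ⟨s, hs⟩
    (f := fun t => bb (u R t) (v R t) (w R t) x y z)
    (by apply Continuous.continuousOn; unfold bb; fun_prop)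
  have hmaxall : ∀ s, bb (u R s) (v R s) (w R s) x y z ≤ bb (u R m) (v R m) (w R m) x y z := by
    intro s
    obtain ⟨s', hs', he⟩ := hper.exists_mem_Ico₀ (by positivity) s
    have h1 := hmax (Ico_subset_Icc_self hs')
    exact he.le.trans h1
  set M := bb (u R m) (v R m) (w R m) x y z - 1 with hM
  have hM0 : 0 ≤ M := by have := hc m; linarith
  have hCM : M + 1 ≤ C := by have := hbd m hm; linarith
  have := var_le (h := fun t => M / (4 * π) + zz u v w R t * (π * (C + 1))) hd
    (by unfold bb; fun_prop) (by fun_prop) ?_ hm ht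
  · rw [h0, intervalIntegral.integral_add (by simp) ((S.sz.ii _ _ _).mul_const _),
      intervalIntegral.integral_mul_const] at this
    have e : ∫ t in (0 : ℝ)..(2 * π), M / (4 * π) = M / 2 := by
      simp; field_simp; ring
    rw [e] at this
    have e2 : (∫ t in (0 : ℝ)..(2 * π), zz u v w R t) = II (zz u v w) R := rfl
    rw [e2] at this
    have := hmaxall s
    nlinarith
  · intro t
    have h1 := S.csT R t h
    have hz := S.z0 R t
    have hct := hc t
    have hcm := hmaxall t
    have hp := pi_pos
    apply abs_le_of_sq_le_sq _ (by positivity)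
    set c := bb (u R t) (v R t) (w R t) x y z
    set ζ := zz u v w R t
    have h2 : c ^ 2 - 1 ≤ M * (C + 1) := by nlinarith
    have h3 : (M / (4 * π) + ζ * (π * (C + 1))) ^ 2 - ζ * (M * (C + 1))
      = (M / (4 * π) - ζ * (π * (C + 1))) ^ 2 := by field_simp; ring
    nlinarith [sq_nonneg (M / (4 * π) - ζ * (π * (C + 1))), mul_le_mul_of_nonneg_left h2 hz]

end Sol

lemma bb_comm (a b c x y z : ℝ) : bb a b c x y z = bb x y z a b c := by unfold bb; ring

lemma bb_int {f g h : ℝ → ℝ} (hf : Continuous f) (hg : Continuous g) (hh : Continuous h)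
    (x y z : ℝ) : bb (∫ t in (0 : ℝ)..(2 * π), f t) (∫ t in (0 : ℝ)..(2 * π), g t)
      (∫ t in (0 : ℝ)..(2 * π), h t) x y z
      = ∫ t in (0 : ℝ)..(2 * π), bb (f t) (g t) (h t) x y z := by
  unfold bb
  rw [intervalIntegral.integral_sub, intervalIntegral.integral_div, intervalIntegral.integral_add,
    intervalIntegral.integral_mul_const, intervalIntegral.integral_mul_const,
    intervalIntegral.integral_mul_const]
  all_goals exact Continuous.intervalIntegrable (by fun_prop) _ _

lemma int_mono {f g : ℝ → ℝ} (hf : Continuous f) (hg : Continuous g)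
    (h : ∀ t ∈ Icc 0 (2 * π), f t ≤ g t) :
    ∫ t in (0 : ℝ)..(2 * π), f t ≤ ∫ t in (0 : ℝ)..(2 * π), g t :=
  intervalIntegral.integral_mono_on (by positivity) (hf.intervalIntegrable _ _)
    (hg.intervalIntegrable _ _) h

lemma abs_int_le {f g : ℝ → ℝ} (hf : Continuous f) (hg : Continuous g)
    (h : ∀ t ∈ Icc 0 (2 * π), |f t| ≤ g t) :
    |∫ t in (0 : ℝ)..(2 * π), f t| ≤ ∫ t in (0 : ℝ)..(2 * π), g t := by
  rw [abs_le]
  constructor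
  · rw [← intervalIntegral.integral_neg]
    exact int_mono hg.neg hf fun t ht => (abs_le.1 (h t ht)).1
  · exact int_mono hf hg fun t ht => (abs_le.1 (h t ht)).2

/-- The correction functional. -/
noncomputable def gam (u v w : ℝ → ℝ → ℝ) (R : ℝ) : ℝ :=
  bb (II (pdR u) R) (II (pdR v) R) (II (pdR w) R) (II u R) (II v R) (II w R)

namespace Sol

variable {R₀ : ℝ} {u v w : ℝ → ℝ → ℝ}

lemma IIdd {f : ℝ → ℝ → ℝ} (hf : Sm f) (hp : ∀ R t, f R (t + 2 * π) = f R t)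
    {g : ℝ → ℝ → ℝ} (hg : Sm g) (R : ℝ)
    (h : ∀ t, pdR (pdR f) R t = pdT (pdT f) R t - R⁻¹ * pdR f R t + g R t) :
    II (pdR (pdR f)) R = - R⁻¹ * II (pdR f) R + II g R := by
  have e : II (pdR (pdR f)) R
      = ∫ t in (0 : ℝ)..(2 * π), (pdT (pdT f) R t - R⁻¹ * pdR f R t + g R t) := by
    unfold II; simp only [h]
  have hz : II (pdT (pdT f)) R = 0 := by
    apply II_pdT hf.dT
    have := (pd_periodic hp R 0).2
    simpa using this
  rw [e, intervalIntegral.integral_add _ (hg.ii _ _ _), intervalIntegral.integral_sub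
    (hf.dT.dT.ii _ _ _) ((hf.dR.ii _ _ _).const_mul _), intervalIntegral.integral_const_mul]
  · unfold II at hz ⊢
    rw [hz]; ring
  · exact (hf.dT.dT.ii _ _ _).sub ((hf.dR.ii _ _ _).const_mul _)

lemma H_ineq (S : Sol R₀ u v w) (h0 : 0 < R₀) (E0 : ℝ) (hE00 : 0 ≤ E0)
    (hE0 : ∀ R, R₀ ≤ R → II (kk u v w) R + II (zz u v w) R ≤ E0) :
    ∃ C, 0 < C ∧ ∀ R, R₀ ≤ R → |gam u v w R| ≤ C * (II (kk u v w) R + II (zz u v w) R) ∧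
      ∃ G', HasDerivAt (gam u v w) G' R ∧
      G' ≤ - R⁻¹ * gam u v w R + 2 * π * II (kk u v w) R - 2 * π * II (zz u v w) R
        + C * II (zz u v w) R * II (kk u v w) R := by
  have hp := pi_pos
  set c := 2 * π * (Real.exp (π + E0 / 2) + 1) with hc
  have hc0 : 0 < c := by positivity
  set D := c * (2 + c * E0) with hD
  have hD0 : 0 < D := by positivity
  refine ⟨π + 2 * π ^ 2 * D + 2 * π * c + 2 * π * D, by positivity, ?_⟩
  intro R hR
  have hRpos : 0 < R := lt_of_lt_of_le h0 hR
  have hK := S.K0 R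
  have hZ := S.Z0 R
  have hZE : II (zz u v w) R ≤ E0 := by linarith [hE0 R hR]
  have cu := S.su.contT R
  have cv := S.sv.contT R
  have cw := S.sw.contT R
  have cu' := S.su.dR.contT R
  have cv' := S.sv.dR.contT R
  have cw' := S.sw.dR.contT R
  have cz := S.sz.contT R
  have ck := S.sk.contT R
  set K := II (kk u v w) R with hKdef
  set Z := II (zz u v w) R with hZdef
  have b1 : ∀ s ∈ Icc 0 (2 * π), ∀ t ∈ Icc 0 (2 * π),
      bb (u R s) (v R s) (w R s) (u R t) (v R t) (w R t) ≤ 1 + c * Z :=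
    fun s hs t ht => S.osc R E0 hZE hs ht
  have b0 : ∀ s t, 1 ≤ bb (u R s) (v R s) (w R s) (u R t) (v R t) (w R t) :=
    fun s t => bb_one_le (S.pos R s) (S.pos R t) (S.unit R s) (S.unit R t)
  have b2 : ∀ s ∈ Icc 0 (2 * π), ∀ t ∈ Icc 0 (2 * π),
      (bb (pdR u R s) (pdR v R s) (pdR w R s) (u R t) (v R t) (w R t)) ^ 2
        ≤ kk u v w R s * (D * Z) := by
    intro s hs t ht
    refine (S.csR R s (S.unit R t)).trans (mul_le_mul_of_nonneg_left ?_ (S.k0 R s))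
    have h1 := b1 s hs t ht
    have h2 := b0 s t
    have h3 : c * Z ≤ c * E0 := mul_le_mul_of_nonneg_left hZE hc0.le
    have h4 : 0 ≤ c * Z := by positivity
    rw [hD]
    nlinarith
  constructor
  · -- bound on gam
    have e1 : gam u v w R = ∫ s in (0 : ℝ)..(2 * π),
        bb (pdR u R s) (pdR v R s) (pdR w R s) (II u R) (II v R) (II w R) :=
      bb_int cu' cv' cw' _ _ _
    have e2 : ∀ s ∈ Icc 0 (2 * π),
        |bb (pdR u R s) (pdR v R s) (pdR w R s) (II u R) (II v R) (II w R)|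
          ≤ kk u v w R s * π + π * (D * Z) := by
      intro s hs
      have e3 : bb (pdR u R s) (pdR v R s) (pdR w R s) (II u R) (II v R) (II w R)
        = ∫ t in (0 : ℝ)..(2 * π), bb (u R t) (v R t) (w R t)
          (pdR u R s) (pdR v R s) (pdR w R s) := by
        rw [bb_comm]; exact bb_int cu cv cw _ _ _
      rw [e3]
      refine (abs_int_le (g := fun _ => (kk u v w R s + D * Z) / 2)
        (by unfold bb; fun_prop) (by fun_prop) ?_).trans (le_of_eq ?_)
      · intro t ht
        rw [bb_comm]
        have h1 := b2 s hs t ht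
        have hk := S.k0 R s
        apply abs_le_of_sq_le_sq _ (by positivity)
        nlinarith [sq_nonneg (kk u v w R s - D * Z)]
      · simp; ring
    rw [e1]
    refine (abs_int_le (by unfold bb; fun_prop) (by fun_prop) e2).trans ?_
    rw [intervalIntegral.integral_add ((S.sk.ii _ _ _).mul_const _) (by simp),
      intervalIntegral.integral_mul_const]
    have : (∫ t in (0 : ℝ)..(2 * π), kk u v w R t) = K := rfl
    rw [this]
    simp only [intervalIntegral.integral_const, sub_zero, smul_eq_mul]
    have h1 : 0 ≤ (2 * π ^ 2 * D + 2 * π * c + 2 * π * D) * K := by positivity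
    have h2 : 0 ≤ (π + 2 * π * c + 2 * π * D) * Z := by positivity
    nlinarith
  · -- derivative
    set e : ℝ → ℝ → ℝ := fun R t => kk u v w R t - zz u v w R t with he
    have se : Sm e := S.sk.sub S.sz
    have ce := se.contT R
    have iu := IIdd S.su S.pu (se.mul S.su) R (S.eu R hR)
    have iv := IIdd S.sv S.pv (se.mul S.sv) R (S.ev R hR)
    have iw := IIdd S.sw S.pw (se.mul S.sw) R (S.ew R hR)
    have hd := ((((II_hasDeriv S.su.dR R).mul (II_hasDeriv S.sv R)).add
      ((II_hasDeriv S.sv.dR R).mul (II_hasDeriv S.su R))).div_const 2).sub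
      ((II_hasDeriv S.sw.dR R).mul (II_hasDeriv S.sw R))
    refine ⟨_, hd, ?_⟩
    rw [iu, iv, iw]
    -- first term
    have t1 : bb (II (fun R t => e R t * u R t) R) (II (fun R t => e R t * v R t) R)
        (II (fun R t => e R t * w R t) R) (II u R) (II v R) (II w R)
        ≤ (2 * π + 2 * π * c * Z) * K - 2 * π * Z := by
      have e1 : bb (II (fun R t => e R t * u R t) R) (II (fun R t => e R t * v R t) R)
        (II (fun R t => e R t * w R t) R) (II u R) (II v R) (II w R)
        = ∫ s in (0 : ℝ)..(2 * π), bb (e R s * u R s) (e R s * v R s) (e R s * w R s)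
          (II u R) (II v R) (II w R) :=
        bb_int (ce.mul cu) (ce.mul cv) (ce.mul cw) _ _ _
      have e2 : ∀ s ∈ Icc 0 (2 * π), bb (e R s * u R s) (e R s * v R s) (e R s * w R s)
          (II u R) (II v R) (II w R)
          ≤ kk u v w R s * (2 * π + 2 * π * c * Z) - zz u v w R s * (2 * π) := by
        intro s hs
        have e3 : bb (u R s) (v R s) (w R s) (II u R) (II v R) (II w R)
          = ∫ t in (0 : ℝ)..(2 * π), bb (u R t) (v R t) (w R t) (u R s) (v R s) (w R s) := by
          rw [bb_comm]; exact bb_int cu cv cw _ _ _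
        have e4 : bb (u R s) (v R s) (w R s) (II u R) (II v R) (II w R)
            ≤ 2 * π + 2 * π * c * Z := by
          rw [e3]
          refine (int_mono (g := fun _ => 1 + c * Z) (by unfold bb; fun_prop) (by fun_prop)
            fun t ht => b1 t ht s hs).trans (le_of_eq ?_)
          simp; ring
        have e5 : 2 * π ≤ bb (u R s) (v R s) (w R s) (II u R) (II v R) (II w R) := by
          rw [e3]
          refine le_trans (le_of_eq ?_) (int_mono (f := fun _ => (1 : ℝ)) (by fun_prop)
            (by unfold bb; fun_prop) fun t ht => b0 t s)
          simp
        have e6 : bb (e R s * u R s) (e R s * v R s) (e R s * w R s) (II u R) (II v R) (II w R)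
          = e R s * bb (u R s) (v R s) (w R s) (II u R) (II v R) (II w R) := by
          unfold bb; ring
        rw [e6]
        simp only [he]
        rw [sub_mul]
        exact sub_le_sub (mul_le_mul_of_nonneg_left e4 (S.k0 R s))
          (mul_le_mul_of_nonneg_left e5 (S.z0 R s))
      rw [e1]
      refine (int_mono (by unfold bb; fun_prop) (by fun_prop) e2).trans (le_of_eq ?_)
      rw [intervalIntegral.integral_sub ((S.sk.ii _ _ _).mul_const _)
        ((S.sz.ii _ _ _).mul_const _), intervalIntegral.integral_mul_const,
        intervalIntegral.integral_mul_const]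
      have h1 : (∫ t in (0 : ℝ)..(2 * π), kk u v w R t) = K := rfl
      have h2 : (∫ t in (0 : ℝ)..(2 * π), zz u v w R t) = Z := rfl
      rw [h1, h2]; ring
    -- second term
    have t2 : bb (II (pdR u) R) (II (pdR v) R) (II (pdR w) R)
        (II (pdR u) R) (II (pdR v) R) (II (pdR w) R) ≤ 2 * π * D * Z * K := by
      have h1 := any_ge (a := II (pdR u) R) (b := II (pdR v) R) (c := II (pdR w) R)
        (S.pos R 0) (S.unit R 0)
      have h2 : bb (II (pdR u) R) (II (pdR v) R) (II (pdR w) R) (u R 0) (v R 0) (w R 0)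
        = ∫ s in (0 : ℝ)..(2 * π), bb (pdR u R s) (pdR v R s) (pdR w R s)
          (u R 0) (v R 0) (w R 0) := bb_int cu' cv' cw' _ _ _
      have h3 := cs_int (f := fun s => bb (pdR u R s) (pdR v R s) (pdR w R s)
          (u R 0) (v R 0) (w R 0)) (by unfold bb; fun_prop)
      rw [← h2] at h3
      have h4 := int_mono (f := fun s => (bb (pdR u R s) (pdR v R s) (pdR w R s)
          (u R 0) (v R 0) (w R 0)) ^ 2) (g := fun s => kk u v w R s * (D * Z))
          (by unfold bb; fun_prop) (by fun_prop)
          (fun s hs => b2 s hs 0 ⟨le_refl _, by positivity⟩)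
      rw [intervalIntegral.integral_mul_const] at h4
      have h5 : (∫ t in (0 : ℝ)..(2 * π), kk u v w R t) = K := rfl
      rw [h5] at h4
      have h6 := mul_le_mul_of_nonneg_left h4 (by positivity : 0 ≤ 2 * π)
      have h7 : bb (II (pdR u) R) (II (pdR v) R) (II (pdR w) R)
        (II (pdR u) R) (II (pdR v) R) (II (pdR w) R)
        = - (II (pdR w) R ^ 2 - II (pdR u) R * II (pdR v) R) := by unfold bb; ring
      rw [h7]
      linarith
    have h8 : 0 ≤ (π + 2 * π ^ 2 * D) * Z * K := by positivity
    refine le_trans (le_of_eq ?_) (le_trans (add_le_add (le_refl (- R⁻¹ * gam u v w R))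
      (add_le_add t1 t2)) ?_)
    · unfold gam bb; ring
    · linarith

end Sol

lemma ode_decay {R₀ C : ℝ} (h0 : 0 < R₀) (hC : 0 < C) {E K H : ℝ → ℝ}
    (hE : ∀ R, R₀ ≤ R → HasDerivAt E (-2 * R⁻¹ * K R) R)
    (hK : ∀ R, R₀ ≤ R → 0 ≤ K R) (hE0 : ∀ R, R₀ ≤ R → 0 ≤ E R)
    (hHE : ∀ R, R₀ ≤ R → |H R - E R| ≤ C * R⁻¹ * E R)
    (hH : ∀ R, R₀ ≤ R → ∃ H', HasDerivAt H H' R ∧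
      H' ≤ - R⁻¹ * E R + C * R⁻¹ * E R * K R + C * R⁻¹ ^ 2 * E R) :
    ∃ B, 0 < B ∧ ∀ R, R₀ ≤ R → E R ≤ B * R⁻¹ := by
  have anti : ∀ R S, R₀ ≤ R → R ≤ S → E S ≤ E R := by
    have : AntitoneOn E (Ici R₀) := by
      apply antitoneOn_of_deriv_nonpos (convex_Ici R₀)
      · exact fun x hx => (hE x hx).continuousAt.continuousWithinAt
      · intro x hx
        rw [interior_Ici] at hx
        exact (hE x hx.le).differentiableAt.differentiableWithinAt
      · intro x hx
        rw [interior_Ici] at hx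
        rw [(hE x hx.le).deriv]
        have := hK x hx.le
        have hx0 : 0 < x := h0.trans hx
        have : 0 ≤ x⁻¹ * K x := by positivity
        linarith
    exact fun R S hR hS => this hR (hR.trans hS) hS
  set R1 := max R₀ (2 * C) with hR1
  have hR1a : R₀ ≤ R1 := le_max_left _ _
  have hR1b : 2 * C ≤ R1 := le_max_right _ _
  have hR1p : 0 < R1 := h0.trans_le hR1a
  have half : ∀ R, R1 ≤ R → E R / 2 ≤ H R := by
    intro R hR
    have h1 := (abs_le.1 (hHE R (hR1a.trans hR))).1
    have h2 := hE0 R (hR1a.trans hR)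
    have hRp : 0 < R := hR1p.trans_le hR
    have h3 : C * R⁻¹ ≤ 1 / 2 := by
      rw [← div_eq_mul_inv, div_le_iff₀ hRp]; linarith
    nlinarith
  set φ : ℝ → ℝ := fun R => R * H R * Real.exp (C * E R + 4 * C * R⁻¹) with hφ
  choose! H' hH1 hH2 using hH
  have dφ : ∀ R, R1 ≤ R → HasDerivAt φ ((1 * H R + R * H' R) * Real.exp (C * E R + 4 * C * R⁻¹)
      + R * H R * (Real.exp (C * E R + 4 * C * R⁻¹) *
        (C * (-2 * R⁻¹ * K R) + 4 * C * (-(R ^ 2)⁻¹)))) R := by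
    intro R hR
    have hRp : 0 < R := hR1p.trans_le hR
    exact ((hasDerivAt_id R).mul (hH1 R (hR1a.trans hR))).mul
      ((((hE R (hR1a.trans hR)).const_mul C).add
        ((hasDerivAt_inv hRp.ne').const_mul (4 * C))).exp)
  have anti2 : AntitoneOn φ (Ici R1) := by
    apply antitoneOn_of_deriv_nonpos (convex_Ici R1)
    · exact fun x hx => (dφ x hx).continuousAt.continuousWithinAt
    · intro x hx
      rw [interior_Ici] at hx
      exact (dφ x hx.le).differentiableAt.differentiableWithinAt
    · intro R hR
      rw [interior_Ici] at hR
      have hR : R1 ≤ R := le_of_lt (mem_Ioi.1 hR)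
      rw [(dφ R hR).deriv]
      have hRR := hR1a.trans hR
      have hRp : 0 < R := hR1p.trans_le hR
      have hk := hK R hRR
      have he := hE0 R hRR
      have h1 := (abs_le.1 (hHE R hRR)).2
      have h2 := half R hR
      have h3 := mul_le_mul_of_nonneg_left (hH2 R hRR) hRp.le
      have h4 : R * (- R⁻¹ * E R + C * R⁻¹ * E R * K R + C * R⁻¹ ^ 2 * E R)
        = - E R + C * E R * K R + C * R⁻¹ * E R := by field_simp
      rw [h4] at h3
      have h5 : R * H R * (C * (-2 * R⁻¹ * K R) + 4 * C * (-(R ^ 2)⁻¹))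
        = - (H R * (2 * C * K R + 4 * C * R⁻¹)) := by field_simp; ring
      have hi : 0 < R⁻¹ := by positivity
      have h6 := mul_le_mul_of_nonneg_right h2
        (by positivity : 0 ≤ 2 * C * K R + 4 * C * R⁻¹)
      have h7 : (1 * H R + R * H' R) + R * H R * (C * (-2 * R⁻¹ * K R) + 4 * C * (-(R ^ 2)⁻¹))
        ≤ 0 := by
        rw [h5]; nlinarith
      have h8 := mul_nonpos_of_nonpos_of_nonneg h7
        (Real.exp_pos (C * E R + 4 * C * R⁻¹)).le
      linarith
  refine ⟨|2 * φ R1| + E R₀ * R1 + 1, ?_, ?_⟩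
  · have := hE0 R₀ le_rfl
    positivity
  intro R hR
  have hRp : 0 < R := h0.trans_le hR
  have hE00 := hE0 R₀ le_rfl
  rw [← div_eq_mul_inv, le_div_iff₀ hRp]
  rcases le_total R R1 with h | h
  · have h1 := anti R₀ R le_rfl hR
    have h2 : E R * R ≤ E R₀ * R1 := by
      have := hE0 R hR
      gcongr
    have := abs_nonneg (2 * φ R1)
    linarith
  · have h1 : φ R ≤ φ R1 := anti2 (by simp) h h
    have h2 := half R h
    have h3 := hE0 R hR
    have h4 : R * H R ≤ φ R := by
      have : 0 ≤ R * H R := mul_nonneg hRp.le (by linarith)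
      have h5 : 1 ≤ Real.exp (C * E R + 4 * C * R⁻¹) := Real.one_le_exp (by positivity)
      simp only [hφ]
      nlinarith
    have h5 := le_abs_self (2 * φ R1)
    have h6 : 0 ≤ E R₀ * R1 := by positivity
    nlinarith

lemma anti_of_hasDeriv {R₀ : ℝ} {f f' : ℝ → ℝ} (h : ∀ R, R₀ ≤ R → HasDerivAt f (f' R) R)
    (h' : ∀ R, R₀ ≤ R → f' R ≤ 0) {R : ℝ} (hR : R₀ ≤ R) : f R ≤ f R₀ := by
  have : AntitoneOn f (Ici R₀) := by
    apply antitoneOn_of_deriv_nonpos (convex_Ici R₀)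
    · exact fun x hx => (h x hx).continuousAt.continuousWithinAt
    · intro x hx
      rw [interior_Ici] at hx
      exact (h x hx.le).differentiableAt.differentiableWithinAt
    · intro x hx
      rw [interior_Ici] at hx
      rw [(h x hx.le).deriv]
      exact h' x hx.le
  exact this (by simp) hR hR

namespace Sol

variable {R₀ : ℝ} {u v w : ℝ → ℝ → ℝ}

lemma E_le (S : Sol R₀ u v w) (h0 : 0 < R₀) (R : ℝ) (hR : R₀ ≤ R) :
    II (kk u v w) R + II (zz u v w) R ≤ II (kk u v w) R₀ + II (zz u v w) R₀ := by
  refine anti_of_hasDeriv (f := fun R => II (kk u v w) R + II (zz u v w) R)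
    (fun R hR => S.dE hR) (fun R hR => ?_) hR
  have := S.K0 R
  have hRp : 0 < R := h0.trans_le hR
  have : 0 ≤ R⁻¹ * II (kk u v w) R := by positivity
  linarith

lemma decay (S : Sol R₀ u v w) (h0 : 0 < R₀) :
    ∃ B, 0 < B ∧ ∀ R, R₀ ≤ R → II (kk u v w) R + II (zz u v w) R ≤ B * R⁻¹ := by
  obtain ⟨C, hC, hh⟩ := S.H_ineq h0 _ (add_nonneg (S.K0 R₀) (S.Z0 R₀)) (S.E_le h0)
  have hp := pi_pos
  have hp3 := pi_gt_three
  refine ode_decay (C := C) (E := fun R => II (kk u v w) R + II (zz u v w) R)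
    (K := II (kk u v w))
    (H := fun R => II (kk u v w) R + II (zz u v w) R + R⁻¹ * gam u v w R / (2 * π))
    h0 hC (fun R hR => S.dE hR) (fun R _ => S.K0 R)
    (fun R _ => add_nonneg (S.K0 R) (S.Z0 R)) ?_ ?_
  · intro R hR
    have hRp : 0 < R := h0.trans_le hR
    have h1 := (hh R hR).1
    have hE := add_nonneg (S.K0 R) (S.Z0 R)
    simp only [add_sub_cancel_left]
    rw [abs_div, abs_mul, abs_of_pos (by positivity : 0 < R⁻¹), abs_of_pos (by positivity : 0 < 2 * π),
      div_le_iff₀ (by positivity)]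
    have h2 := mul_le_mul_of_nonneg_left h1 (by positivity : 0 ≤ R⁻¹)
    have h3 : 0 ≤ C * R⁻¹ * (II (kk u v w) R + II (zz u v w) R) := by positivity
    nlinarith
  · intro R hR
    have hRp : 0 < R := h0.trans_le hR
    obtain ⟨h1, G', hG, hG'⟩ := hh R hR
    have hK := S.K0 R
    have hZ := S.Z0 R
    refine ⟨_, (S.dE hR).add (((hasDerivAt_inv hRp.ne').mul hG).div_const (2 * π)), ?_⟩
    set K := II (kk u v w) R
    set Z := II (zz u v w) R
    set g := gam u v w R
    have hi : 0 < R⁻¹ := by positivity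
    rw [show (R ^ 2)⁻¹ = R⁻¹ ^ 2 by rw [inv_pow]]
    set i := R⁻¹
    have a1 := mul_le_mul_of_nonneg_left hG' hi.le
    have a2 := (abs_le.1 h1).1
    have a3 := mul_le_mul_of_nonneg_left a2 (by positivity : 0 ≤ 2 * i ^ 2)
    have e : (-i ^ 2 * g + i * G') / (2 * π) ≤
        i * K - i * Z + C * i * (K + Z) * K + C * i ^ 2 * (K + Z) := by
      rw [div_le_iff₀ (by positivity)]
      have a4 : C * i * Z * K ≤ C * i * (K + Z) * K * (2 * π) := by
        have : C * i * Z * K ≤ C * i * (K + Z) * K := by gcongr; linarith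
        have : 0 ≤ C * i * (K + Z) * K := by positivity
        nlinarith
      have a5 : 2 * (C * i ^ 2 * (K + Z)) ≤ C * i ^ 2 * (K + Z) * (2 * π) := by
        have : 0 ≤ C * i ^ 2 * (K + Z) := by positivity
        nlinarith
      linarith
    linarith

lemma growth (S : Sol R₀ u v w) (h0 : 0 < R₀) :
    ∃ C, 0 < C ∧ ∀ R, R₀ ≤ R → ∀ t, u R t + v R t ≤ C * Real.exp (C * Real.sqrt R) := by
  obtain ⟨B, hB, hd⟩ := S.decay h0
  have hp := pi_pos
  have hc : ∀ R t, 1 ≤ bb (u R t) (v R t) (w R t) 1 1 0 := fun R t =>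
    bb_one_le (S.pos R t) one_pos (S.unit R t) (by norm_num)
  set l : ℝ → ℝ → ℝ := fun R t => Real.log (bb (u R t) (v R t) (w R t) 1 1 0) with hl
  have sc : Sm (fun R t => bb (u R t) (v R t) (w R t) 1 1 0) := by
    have := ((S.su.mul (Sm.const 1)).add (S.sv.mul (Sm.const 1))).mul (Sm.const 2⁻¹)
    have := this.sub (S.sw.mul (Sm.const 0))
    exact this
  have sl : Sm l := sc.log (fun R t => by linarith [hc R t])
  have hdl : ∀ R t, pdR l R t = bb (pdR u R t) (pdR v R t) (pdR w R t) 1 1 0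
      / bb (u R t) (v R t) (w R t) 1 1 0 := by
    intro R t
    have : HasDerivAt (fun r => bb (u r t) (v r t) (w r t) 1 1 0)
        (bb (pdR u R t) (pdR v R t) (pdR w R t) 1 1 0) R :=
      ((((S.su.hasR R t).mul_const 1).add ((S.sv.hasR R t).mul_const 1)).div_const 2).sub
      ((S.sw.hasR R t).mul_const 0)
    exact (this.log (by linarith [hc R t])).deriv
  have hm : ∀ R, R₀ ≤ R → II (pdR l) R ≤ (2 * π + B) * (1 / (2 * √R)) := by
    intro R hR
    have hRp : 0 < R := h0.trans_le hR
    have hs : 0 < √R := Real.sqrt_pos.2 hRp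
    have ck := S.sk.contT R
    have h1 : ∀ t ∈ Icc 0 (2 * π), pdR l R t ≤ (√R)⁻¹ / 2 + kk u v w R t * (√R / 2) := by
      intro t _
      have h2 := S.csR R t (x := 1) (y := 1) (z := 0) (by norm_num)
      have hk := S.k0 R t
      have hct := hc R t
      rw [hdl, div_le_iff₀ (by linarith)]
      refine (le_abs_self _).trans (abs_le_of_sq_le_sq ?_ (by positivity))
      set c := bb (u R t) (v R t) (w R t) 1 1 0
      set k := kk u v w R t
      have e : ((√R)⁻¹ / 2 + k * (√R / 2)) ^ 2 - k = ((√R)⁻¹ / 2 - k * (√R / 2)) ^ 2 := by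
        field_simp; ring
      nlinarith [mul_nonneg (sq_nonneg ((√R)⁻¹ / 2 - k * (√R / 2))) (sq_nonneg c)]
    have h2 := int_mono (sl.dR.contT R) (by fun_prop) h1
    rw [intervalIntegral.integral_add (by simp) ((S.sk.ii _ _ _).mul_const _),
      intervalIntegral.integral_mul_const] at h2
    simp only [intervalIntegral.integral_const, sub_zero, smul_eq_mul] at h2
    have h3 : (∫ t in (0 : ℝ)..(2 * π), kk u v w R t) ≤ B * R⁻¹ := by
      have := hd R hR
      have := S.Z0 R
      have e : (∫ t in (0 : ℝ)..(2 * π), kk u v w R t) = II (kk u v w) R := rfl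
      linarith
    have h4 := mul_le_mul_of_nonneg_right h3 (by positivity : 0 ≤ √R / 2)
    have h5 : B * R⁻¹ * (√R / 2) = B * (1 / (2 * √R)) := by
      have := Real.sq_sqrt hRp.le
      field_simp
      linarith
    have h6 : 2 * π * ((√R)⁻¹ / 2) = 2 * π * (1 / (2 * √R)) := by field_simp
    unfold II
    rw [add_mul]
    linarith
  have hmm : ∀ R, R₀ ≤ R → II l R ≤ II l R₀ + (2 * π + B) * √R := by
    intro R hR
    have := anti_of_hasDeriv (R₀ := R₀) (f := fun R => II l R - (2 * π + B) * √R)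
      (f' := fun R => II (pdR l) R - (2 * π + B) * (1 / (2 * √R)))
      (fun R hR => (II_hasDeriv sl R).sub
        ((Real.hasDerivAt_sqrt (h0.trans_le hR).ne').const_mul _))
      (fun R hR => by linarith [hm R hR]) hR
    have h2 : 0 ≤ (2 * π + B) * √R₀ := by positivity
    linarith
  set E0 := II (kk u v w) R₀ + II (zz u v w) R₀ with hE0
  have hl1 : ∀ R, R₀ ≤ R → ∀ t ∈ Icc 0 (2 * π),
      2 * π * l R t ≤ II l R + 2 * π * (π + E0 / 2) := by
    intro R hR t ht
    have h1 : ∀ s ∈ Icc 0 (2 * π), l R t ≤ l R s + (π + E0 / 2) := by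
      intro s hs
      have := S.log_osc R (x := 1) (y := 1) (z := 0) one_pos (by norm_num) ht hs
      have h2 := S.E_le h0 R hR
      have h3 := S.K0 R
      simp only [hl]
      linarith
    have cl := sl.contT R
    have h2 := int_mono (f := fun _ => l R t) (by fun_prop) (by fun_prop) h1
    rw [intervalIntegral.integral_add (sl.ii _ _ _) (by simp)] at h2
    simp only [intervalIntegral.integral_const, sub_zero, smul_eq_mul] at h2
    exact h2
  set a := |II l R₀| / (2 * π) + π + E0 / 2 with ha
  set b := (2 * π + B) / (2 * π) with hb
  have hbp : 0 < b := by positivity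
  have hl2 : ∀ R, R₀ ≤ R → ∀ t ∈ Icc 0 (2 * π), l R t ≤ a + b * √R := by
    intro R hR t ht
    have h1 := hl1 R hR t ht
    have h2 := hmm R hR
    have h3 := le_abs_self (II l R₀)
    have h4 : 2 * π * (a + b * √R) = |II l R₀| + 2 * π * (π + E0 / 2) + (2 * π + B) * √R := by
      rw [ha, hb]; field_simp; ring
    have h5 : 2 * π * l R t ≤ 2 * π * (a + b * √R) := by linarith
    exact le_of_mul_le_mul_left h5 (by positivity)
  refine ⟨2 * Real.exp a + b, by positivity, ?_⟩
  intro R hR t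
  have hper : Function.Periodic (l R) (2 * π) := by
    intro t; simp only [hl, S.pu, S.pv, S.pw]
  obtain ⟨t', ht', he⟩ := hper.exists_mem_Ico₀ (by positivity) t
  have h1 := hl2 R hR t' (Ico_subset_Icc_self ht')
  rw [← he] at h1
  simp only [hl] at h1
  rw [Real.log_le_iff_le_exp (by linarith [hc R t]), Real.exp_add] at h1
  have h2 : u R t + v R t = 2 * bb (u R t) (v R t) (w R t) 1 1 0 := by unfold bb; ring
  have h3 : Real.exp (b * √R) ≤ Real.exp ((2 * Real.exp a + b) * √R) := by
    apply Real.exp_le_exp.2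
    have := Real.exp_pos a
    have := Real.sqrt_nonneg R
    gcongr
    linarith
  have h4 := Real.exp_pos a
  have h5 := Real.exp_pos (b * √R)
  have h6 := Real.exp_pos ((2 * Real.exp a + b) * √R)
  calc u R t + v R t ≤ 2 * (Real.exp a * Real.exp (b * √R)) := by linarith
    _ = (2 * Real.exp a) * Real.exp (b * √R) := by ring
    _ ≤ (2 * Real.exp a + b) * Real.exp ((2 * Real.exp a + b) * √R) := by
      gcongr
      linarith

end Sol

/-- One-variable second derivatives of the hyperboloid coordinates. -/
lemma second_derivs {p a p1 a1 : ℝ → ℝ} {p2 a2 t : ℝ} (hp : ∀ s, HasDerivAt p (p1 s) s)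
    (ha : ∀ s, HasDerivAt a (a1 s) s) (hp1 : HasDerivAt p1 p2 t) (ha1 : HasDerivAt a1 a2 t) :
    (deriv (fun s => Real.exp (p s)) = fun s => Real.exp (p s) * p1 s) ∧
    (deriv (fun s => a s * Real.exp (p s)) =
      fun s => a1 s * Real.exp (p s) + a s * (Real.exp (p s) * p1 s)) ∧
    (deriv (fun s => Real.exp (- p s) + a s * (a s * Real.exp (p s))) =
      fun s => Real.exp (- p s) * (- p1 s) + (a1 s * (a s * Real.exp (p s)) +
        a s * (a1 s * Real.exp (p s) + a s * (Real.exp (p s) * p1 s)))) ∧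
    (deriv (deriv (fun s => Real.exp (p s))) t = Real.exp (p t) * (p1 t ^ 2 + p2)) ∧
    (deriv (deriv (fun s => a s * Real.exp (p s))) t =
      Real.exp (p t) * (a2 + 2 * a1 t * p1 t + a t * (p1 t ^ 2 + p2))) ∧
    (deriv (deriv (fun s => Real.exp (- p s) + a s * (a s * Real.exp (p s)))) t =
      Real.exp (- p t) * (p1 t ^ 2 - p2) + Real.exp (p t) * (2 * a t * a2 + 2 * a1 t ^ 2
        + 4 * a t * a1 t * p1 t + a t ^ 2 * (p1 t ^ 2 + p2))) := by
  have e1 : ∀ s, HasDerivAt (fun s => Real.exp (p s)) (Real.exp (p s) * p1 s) s :=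
    fun s => (hp s).exp
  have e2 : ∀ s, HasDerivAt (fun s => Real.exp (- p s)) (Real.exp (- p s) * (- p1 s)) s :=
    fun s => (hp s).neg.exp
  have e3 := fun s => (ha s).mul (e1 s)
  have e4 := fun s => (e2 s).add ((ha s).mul (e3 s))
  have d1 : (deriv (fun s => Real.exp (p s)) = fun s => Real.exp (p s) * p1 s) :=
    funext fun s => (e1 s).deriv
  have d3 : (deriv (fun s => a s * Real.exp (p s)) =
      fun s => a1 s * Real.exp (p s) + a s * (Real.exp (p s) * p1 s)) :=
    funext fun s => (e3 s).deriv
  have d4 : (deriv (fun s => Real.exp (- p s) + a s * (a s * Real.exp (p s))) =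
      fun s => Real.exp (- p s) * (- p1 s) + (a1 s * (a s * Real.exp (p s)) +
        a s * (a1 s * Real.exp (p s) + a s * (Real.exp (p s) * p1 s)))) :=
    funext fun s => (e4 s).deriv
  refine ⟨d1, d3, d4, ?_, ?_, ?_⟩
  · rw [d1]
    refine (((e1 t).mul hp1).congr_deriv ?_).deriv
    ring
  · rw [d3]
    refine (((ha1.mul (e1 t)).add ((ha t).mul ((e1 t).mul hp1))).congr_deriv ?_).deriv
    simp only [Pi.mul_apply, Pi.add_apply, Pi.neg_apply]
    ring
  · rw [d4]
    refine ((((e2 t).mul hp1.neg).add ((ha1.mul (e3 t)).add ((ha t).mul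
      ((ha1.mul (e1 t)).add ((ha t).mul ((e1 t).mul hp1)))))).congr_deriv ?_).deriv
    simp only [Pi.mul_apply, Pi.add_apply, Pi.neg_apply]
    ring

lemma sol_of_PA {R₀ : ℝ} {p A : ℝ → ℝ → ℝ} (sp : Sm p) (sA : Sm A)
    (hp : ∀ R t, p R (t + 2 * π) = p R t) (hA : ∀ R t, A R (t + 2 * π) = A R t)
    (ep : ∀ R, R₀ ≤ R → ∀ t, pdR (pdR p) R t = pdT (pdT p) R t - R⁻¹ * pdR p R t
      + Real.exp (2 * p R t) * (pdR A R t ^ 2 - pdT A R t ^ 2))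
    (eA : ∀ R, R₀ ≤ R → ∀ t, pdR (pdR A) R t = pdT (pdT A) R t - R⁻¹ * pdR A R t
      - 2 * (pdR p R t * pdR A R t - pdT p R t * pdT A R t)) :
    Sol R₀ (fun R t => Real.exp (p R t))
      (fun R t => Real.exp (- p R t) + A R t * (A R t * Real.exp (p R t)))
      (fun R t => A R t * Real.exp (p R t)) := by
  have hin : ∀ R t, Real.exp (- p R t) * Real.exp (p R t) = 1 := by
    intro R t; rw [← Real.exp_add]; simp
  set u : ℝ → ℝ → ℝ := fun R t => Real.exp (p R t) with hu
  set v : ℝ → ℝ → ℝ := fun R t => Real.exp (- p R t) + A R t * (A R t * Real.exp (p R t)) with hv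
  set w : ℝ → ℝ → ℝ := fun R t => A R t * Real.exp (p R t) with hw
  have key : ∀ R, R₀ ≤ R → ∀ t,
      pdR (pdR u) R t =
        pdT (pdT u) R t - R⁻¹ * pdR u R t + (kk u v w R t - zz u v w R t) * u R t ∧
      pdR (pdR v) R t =
        pdT (pdT v) R t - R⁻¹ * pdR v R t + (kk u v w R t - zz u v w R t) * v R t ∧
      pdR (pdR w) R t =
        pdT (pdT w) R t - R⁻¹ * pdR w R t + (kk u v w R t - zz u v w R t) * w R t := by
    intro R hR t
    obtain ⟨r1, r2, r3, r4, r5, r6⟩ := second_derivs (t := R) (fun r => sp.hasR r t)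
      (fun r => sA.hasR r t) (sp.dR.hasR R t) (sA.dR.hasR R t)
    obtain ⟨t1, t2, t3, t4, t5, t6⟩ := second_derivs (t := t) (fun r => sp.hasT R r)
      (fun r => sA.hasT R r) (sp.dT.hasT R t) (sA.dT.hasT R t)
    have r1' := congrFun r1 R
    have r2' := congrFun r2 R
    have r3' := congrFun r3 R
    have t1' := congrFun t1 t
    have t2' := congrFun t2 t
    have t3' := congrFun t3 t
    change pdR u R t = _ at r1'
    change pdR w R t = _ at r2'
    change pdR v R t = _ at r3'
    change pdR (pdR u) R t = _ at r4
    change pdR (pdR w) R t = _ at r5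
    change pdR (pdR v) R t = _ at r6
    change pdT u R t = _ at t1'
    change pdT w R t = _ at t2'
    change pdT v R t = _ at t3'
    change pdT (pdT u) R t = _ at t4
    change pdT (pdT w) R t = _ at t5
    change pdT (pdT v) R t = _ at t6
    have hi := hin R t
    have h2 : Real.exp (2 * p R t) = Real.exp (p R t) ^ 2 := by
      rw [← Real.exp_nat_mul]; norm_num
    have e1 := ep R hR t
    have e2 := eA R hR t
    rw [h2] at e1
    have hk : kk u v w R t = pdR p R t ^ 2 + Real.exp (p R t) ^ 2 * pdR A R t ^ 2 := by
      unfold kk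
      rw [r1', r2', r3']
      linear_combination (pdR p R t ^ 2) * hi
    have hz : zz u v w R t = pdT p R t ^ 2 + Real.exp (p R t) ^ 2 * pdT A R t ^ 2 := by
      unfold zz
      rw [t1', t2', t3']
      linear_combination (pdT p R t ^ 2) * hi
    have c1 : pdR (pdR u) R t =
      pdT (pdT u) R t - R⁻¹ * pdR u R t + (kk u v w R t - zz u v w R t) * u R t := by
      rw [r4, t4, r1', hk, hz]
      simp only [hu]
      rw [e1]; ring
    have c2 : pdR (pdR v) R t =
      pdT (pdT v) R t - R⁻¹ * pdR v R t + (kk u v w R t - zz u v w R t) * v R t := by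
      rw [r6, t6, r3', hk, hz]
      simp only [hv]
      rw [e1, e2]
      set x := Real.exp (p R t)
      set y := Real.exp (- p R t)
      linear_combination (-2 * x * (pdR A R t ^ 2 - pdT A R t ^ 2)) * hi
    have c3 : pdR (pdR w) R t =
      pdT (pdT w) R t - R⁻¹ * pdR w R t + (kk u v w R t - zz u v w R t) * w R t := by
      rw [r5, t5, r2', hk, hz]
      simp only [hw]
      rw [e1, e2]; ring
    exact ⟨c1, c2, c3⟩
  exact {
    su := sp.exp
    sv := sp.neg.exp.add (sA.mul (sA.mul sp.exp))
    sw := sA.mul sp.exp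
    pu := fun R t => by simp only [hu, hp]
    pv := fun R t => by simp only [hv, hp, hA]
    pw := fun R t => by simp only [hw, hp, hA]
    pos := fun R t => Real.exp_pos _
    unit := fun R t => by
      simp only [hu, hv, hw]
      linear_combination hin R t
    eu := fun R hR t => (key R hR t).1
    ev := fun R hR t => (key R hR t).2.1
    ew := fun R hR t => (key R hR t).2.2 }

lemma exists_log_ext {R₀ : ℝ} (h0 : 0 < R₀) : ∃ L : ℝ → ℝ, ContDiff ℝ (⊤ : ℕ∞) L ∧
    ∀ R, R₀ / 2 < R → L R = Real.log R := by
  set χ : ℝ → ℝ := fun R => Real.smoothTransition ((R - R₀ / 4) / (R₀ / 4)) with hχ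
  have sχ : ContDiff ℝ (⊤ : ℕ∞) χ :=
    Real.smoothTransition.contDiff.comp ((contDiff_id.sub contDiff_const).div_const _)
  refine ⟨fun R => Real.log (R * χ R + (1 - χ R)), ?_, ?_⟩
  · apply ContDiff.log
    · exact (contDiff_id.mul sχ).add (contDiff_const.sub sχ)
    · intro R
      apply ne_of_gt
      have hn : 0 ≤ χ R := Real.smoothTransition.nonneg _
      have hl : χ R ≤ 1 := Real.smoothTransition.le_one _
      rcases le_total R (R₀ / 4) with h | h
      · have : χ R = 0 := Real.smoothTransition.zero_of_nonpos
          (div_nonpos_of_nonpos_of_nonneg (by linarith) (by linarith))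
        rw [this]; norm_num
      · have hR : 0 < R := by linarith
        rcases hn.eq_or_lt with h1 | h1
        · rw [← h1]; norm_num
        · have : 0 < R * χ R := by positivity
          linarith
  · intro R hR
    have : χ R = 1 := Real.smoothTransition.one_of_one_le (by
      rw [le_div_iff₀ (by linarith)]; linarith)
    simp only [this]
    congr 1; ring

theorem stmt16
    (R₀ : ℝ) (hR₀ : 0 < R₀)
    (U A : ℝ → ℝ → ℝ)
    (hU : ContDiff ℝ (⊤ : ℕ∞) (Function.uncurry U))
    (hA : ContDiff ℝ (⊤ : ℕ∞) (Function.uncurry A))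
    (hUper : ∀ R θ, U R (θ + 2 * π) = U R θ)
    (hAper : ∀ R θ, A R (θ + 2 * π) = A R θ)
    (eqU : ∀ R, R₀ ≤ R → ∀ θ : ℝ,
      deriv (fun r => r * pdR U r θ) R - deriv (fun t => R * pdT U R t) θ
        = exp (4 * U R θ) / (2 * R) * ((pdR A R θ) ^ 2 - (pdT A R θ) ^ 2))
    (eqA : ∀ R, R₀ ≤ R → ∀ θ : ℝ,
      deriv (fun r => r⁻¹ * pdR A r θ) R - deriv (fun t => R⁻¹ * pdT A R t) θ
        = 4 / R * (-(pdR U R θ * pdR A R θ) + pdT U R θ * pdT A R θ))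
    (JX JY : ℝ) :
    ∃ C : ℝ, 0 < C ∧ ∀ R, R₀ ≤ R → ∀ θ : ℝ,
      |((A R θ) ^ 2 * exp (2 * U R θ) / R ^ 2 + exp (-(2 * U R θ))) * JX
        - A R θ * exp (2 * U R θ) / R ^ 2 * JY| ≤ C * exp (C * Real.sqrt R)
      ∧ |-(A R θ * exp (2 * U R θ) / R ^ 2) * JX
        + exp (2 * U R θ) / R ^ 2 * JY| ≤ C * exp (C * Real.sqrt R) := by
  obtain ⟨L, sL, hL⟩ := exists_log_ext hR₀
  have sU : Sm U := hU
  have sA : Sm A := hA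
  have sLL : Sm (fun R _ => L R) := sL.comp contDiff_fst
  set p : ℝ → ℝ → ℝ := fun R t => 2 * U R t - L R with hp
  have sp : Sm p := ((Sm.const 2).mul sU).sub sLL
  -- derivatives of the extended logarithm
  have dL : ∀ R, R₀ / 2 < R → HasDerivAt L R⁻¹ R := by
    intro R hR
    refine (Real.hasDerivAt_log (by linarith)).congr_of_eventuallyEq ?_
    filter_upwards [lt_mem_nhds hR] with r hr using hL r hr
  have pR : ∀ R, R₀ / 2 < R → ∀ t, pdR p R t = 2 * pdR U R t - R⁻¹ := by
    intro R hR t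
    exact (((sU.hasR R t).const_mul 2).sub (dL R hR)).deriv
  have pT : ∀ R t, pdT p R t = 2 * pdT U R t := by
    intro R t
    have := ((sU.hasT R t).const_mul 2).sub_const (L R)
    exact this.deriv
  have pRR : ∀ R, R₀ ≤ R → ∀ t, pdR (pdR p) R t = 2 * pdR (pdR U) R t + (R ^ 2)⁻¹ := by
    intro R hR t
    have h1 : HasDerivAt (fun r => 2 * pdR U r t - r⁻¹) (2 * pdR (pdR U) R t - -(R ^ 2)⁻¹) R :=
      ((sU.dR.hasR R t).const_mul 2).sub (hasDerivAt_inv (by linarith))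
    have h2 : HasDerivAt (fun r => pdR p r t) (2 * pdR (pdR U) R t - -(R ^ 2)⁻¹) R := by
      refine h1.congr_of_eventuallyEq ?_
      filter_upwards [lt_mem_nhds (show R₀ / 2 < R by linarith)] with r hr using pR r hr t
    have := h2.deriv
    change pdR (pdR p) R t = _ at this
    rw [this]; ring
  have pTT : ∀ R t, pdT (pdT p) R t = 2 * pdT (pdT U) R t := by
    intro R t
    have h1 : HasDerivAt (fun s => 2 * pdT U R s) (2 * pdT (pdT U) R t) t :=
      (sU.dT.hasT R t).const_mul 2
    have h2 : pdT p R = fun s => 2 * pdT U R s := funext fun s => pT R s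
    have h3 : pdT (pdT p) R t = deriv (pdT p R) t := rfl
    rw [h3, h2]; exact h1.deriv
  have hexp : ∀ R, R₀ ≤ R → ∀ t, Real.exp (p R t) = Real.exp (2 * U R t) / R := by
    intro R hR t
    simp only [hp]
    rw [hL R (by linarith), Real.exp_sub, Real.exp_log (by linarith)]
  have S := sol_of_PA (R₀ := R₀) sp sA (fun R t => by simp only [hp, hUper]) hAper ?_ ?_
  · obtain ⟨C, hC, hg⟩ := S.growth hR₀
    set D := (|JX| + |JY|) / R₀ with hD
    have hD0 : 0 ≤ D := by positivity
    refine ⟨C * (D + 1), by positivity, ?_⟩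
    intro R hR t
    have hRp : 0 < R := hR₀.trans_le hR
    have h1 := hg R hR t
    have hx := S.pos R t
    have hun := S.unit R t
    have hneg : Real.exp (- p R t) = R * Real.exp (-(2 * U R t)) := by
      rw [Real.exp_neg, hexp R hR, Real.exp_neg]
      field_simp
    have e1 : (A R t) ^ 2 * Real.exp (2 * U R t) / R ^ 2 + Real.exp (-(2 * U R t))
        = (Real.exp (- p R t) + A R t * (A R t * Real.exp (p R t))) / R := by
      rw [hneg, hexp R hR]; field_simp; ring
    have e2 : A R t * Real.exp (2 * U R t) / R ^ 2 = A R t * Real.exp (p R t) / R := by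
      rw [hexp R hR]; field_simp
    have e3 : Real.exp (2 * U R t) / R ^ 2 = Real.exp (p R t) / R := by
      rw [hexp R hR]; field_simp
    rw [e1, e2, e3]
    set u := Real.exp (p R t)
    set w := A R t * u
    have hv : 0 < Real.exp (- p R t) + A R t * w := by
      have : 0 < Real.exp (- p R t) := Real.exp_pos _
      have : A R t * w = A R t ^ 2 * u := by ring
      have : 0 ≤ A R t ^ 2 * u := by positivity
      linarith
    set v := Real.exp (- p R t) + A R t * w
    have hw : |w| ≤ u + v := by
      apply abs_le_of_sq_le_sq _ (by positivity)
      nlinarith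
    have hfin : (u + v) * D ≤ C * (D + 1) * Real.exp (C * (D + 1) * √R) := by
      have h3 : Real.exp (C * √R) ≤ Real.exp (C * (D + 1) * √R) := by
        apply Real.exp_le_exp.2
        have : 0 ≤ C * √R * D := by positivity
        linarith
      have h4 : (u + v) * D ≤ C * Real.exp (C * √R) * D := by gcongr
      have h5 : C * D * Real.exp (C * √R) ≤ C * (D + 1) * Real.exp (C * (D + 1) * √R) := by
        gcongr
        linarith
      linarith
    have hgen : ∀ a b : ℝ, |a| ≤ u + v → |b| ≤ u + v →
        |a / R * JX + b / R * JY| ≤ (u + v) * D := by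
      intro a b ha hb
      have : a / R * JX + b / R * JY = (a * JX + b * JY) / R := by ring
      rw [this, abs_div, abs_of_pos hRp]
      have h6 : |a * JX + b * JY| ≤ (u + v) * (|JX| + |JY|) := by
        refine (abs_add_le _ _).trans ?_
        rw [abs_mul, abs_mul, mul_add]
        gcongr
      rw [hD, ← mul_div_assoc]
      gcongr
    constructor
    · refine le_trans (le_of_eq ?_) ((hgen v (-w) ?_ ?_).trans hfin)
      · congr 1; ring
      · rw [abs_of_pos hv]; linarith
      · rwa [abs_neg]
    · refine le_trans (le_of_eq ?_) ((hgen (-w) u ?_ ?_).trans hfin)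
      · congr 1; ring
      · rwa [abs_neg]
      · rw [abs_of_pos hx]; linarith
  · intro R hR t
    have hRp : 0 < R := hR₀.trans_le hR
    have h1 := eqU R hR t
    have d1 : deriv (fun r => r * pdR U r t) R = 1 * pdR U R t + R * pdR (pdR U) R t :=
      ((hasDerivAt_id R).mul (sU.dR.hasR R t)).deriv
    have d2 : deriv (fun s => R * pdT U R s) t = R * pdT (pdT U) R t :=
      ((sU.dT.hasT R t).const_mul R).deriv
    rw [d1, d2] at h1
    have h2 : Real.exp (2 * p R t) = Real.exp (4 * U R t) / R ^ 2 := by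
      have : Real.exp (2 * p R t) = Real.exp (p R t) ^ 2 := by
        rw [← Real.exp_nat_mul]; norm_num
      have h4 : Real.exp (4 * U R t) = Real.exp (2 * U R t) ^ 2 := by
        rw [← Real.exp_nat_mul]; congr 1; push_cast; ring
      rw [this, hexp R hR, h4, div_pow]
    rw [pRR R hR, pTT, pR R (by linarith), h2]
    have h3 : pdR (pdR U) R t = pdT (pdT U) R t - R⁻¹ * pdR U R t
        + Real.exp (4 * U R t) / (2 * R ^ 2) * (pdR A R t ^ 2 - pdT A R t ^ 2) := by
      field_simp at h1 ⊢
      linarith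
    rw [h3]
    field_simp
    ring
  · intro R hR t
    have hRp : 0 < R := hR₀.trans_le hR
    have h1 := eqA R hR t
    have d1 : deriv (fun r => r⁻¹ * pdR A r t) R
        = -(R ^ 2)⁻¹ * pdR A R t + R⁻¹ * pdR (pdR A) R t :=
      ((hasDerivAt_inv hRp.ne').mul (sA.dR.hasR R t)).deriv
    have d2 : deriv (fun s => R⁻¹ * pdT A R s) t = R⁻¹ * pdT (pdT A) R t :=
      ((sA.dT.hasT R t).const_mul R⁻¹).deriv
    rw [d1, d2] at h1
    rw [pR R (by linarith), pT]
    field_simp at h1 ⊢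
    linarith
end

section
/- Let ξ = (ξ^R, ξ^θ, ξ^X, ξ^Y) : (s₀,s₁) → ℝ⁴ be a C² curve with ξ^R(s) ≥ R₀, ξ̇^R(s) > 0 and |ξ̇^θ(s)| ≤ ξ̇^R(s) for all s, satisfying the R-component of the geodesic equation: ξ̈^R(s) = −(∂_R η − ∂_R U)(ξ^R(s),ξ^θ(s)) ((ξ̇^R(s))² + (ξ̇^θ(s))²) − 2 (∂_θ η − ∂_θ U)(ξ^R(s),ξ^θ(s)) ξ̇^R(s) ξ̇^θ(s) + T(s), where T(s) := (1/2) e^{−2(η−U)(ξ^R(s),ξ^θ(s))} [ ∂_R(e^{2U})(ξ^R(s),ξ^θ(s)) (ξ̇^X(s))² + 2 ∂_R(A e^{2U})(ξ^R(s),ξ^θ(s)) ξ̇^X(s) ξ̇^Y(s) + ∂_R(A² e^{2U} + R² e^{−2U})(ξ^R(s),ξ^θ(s)) (ξ̇^Y(s))² ]. Then for all s ∈ (s₀,s₁): (d/ds) [ (ξ^R(s))^{−1/2} ξ̇^R(s) ] ≤ (ξ^R(s))^{−1/2} T(s). -/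
open Real MeasureTheory Set

theorem stmt17
    (R₀ : ℝ) (hR₀ : 0 < R₀)
    (U A : ℝ → ℝ → ℝ)
    (hU : ContDiff ℝ (⊤ : ℕ∞) (Function.uncurry U))
    (hA : ContDiff ℝ (⊤ : ℕ∞) (Function.uncurry A))
    (hUper : ∀ R θ, U R (θ + 2 * π) = U R θ)
    (hAper : ∀ R θ, A R (θ + 2 * π) = A R θ)
    (η : ℝ → ℝ → ℝ)
    (hη : ContDiff ℝ (⊤ : ℕ∞) (Function.uncurry η))
    (hηper : ∀ R θ, η R (θ + 2 * π) = η R θ)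
    (conηR : ∀ R, R₀ ≤ R → ∀ θ : ℝ,
      pdR η R θ = R * ((pdR U R θ) ^ 2 + (pdT U R θ) ^ 2
        + exp (4 * U R θ) / (4 * R ^ 2) * ((pdR A R θ) ^ 2 + (pdT A R θ) ^ 2)))
    (conηT : ∀ R, R₀ ≤ R → ∀ θ : ℝ,
      pdT η R θ = R * (2 * pdR U R θ * pdT U R θ
        + exp (4 * U R θ) / (2 * R ^ 2) * (pdR A R θ * pdT A R θ)))
    (s₀ s₁ : ℝ) (hs : s₀ < s₁)
    (ξR ξθ ξX ξY : ℝ → ℝ)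
    (hξR : ContDiffOn ℝ 2 ξR (Set.Ioo s₀ s₁))
    (hξθ : ContDiffOn ℝ 2 ξθ (Set.Ioo s₀ s₁))
    (hξX : ContDiffOn ℝ 2 ξX (Set.Ioo s₀ s₁))
    (hξY : ContDiffOn ℝ 2 ξY (Set.Ioo s₀ s₁))
    (hdom : ∀ s ∈ Set.Ioo s₀ s₁, R₀ ≤ ξR s)
    (hfut : ∀ s ∈ Set.Ioo s₀ s₁, 0 < deriv ξR s)
    (htl : ∀ s ∈ Set.Ioo s₀ s₁, |deriv ξθ s| ≤ deriv ξR s)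
    (T : ℝ → ℝ)
    (hT : ∀ s ∈ Set.Ioo s₀ s₁,
      T s = 1 / 2 * exp (-(2 * (η (ξR s) (ξθ s) - U (ξR s) (ξθ s))))
        * (deriv (fun r => exp (2 * U r (ξθ s))) (ξR s) * (deriv ξX s) ^ 2
          + 2 * deriv (fun r => A r (ξθ s) * exp (2 * U r (ξθ s))) (ξR s)
              * deriv ξX s * deriv ξY s
          + deriv (fun r => (A r (ξθ s)) ^ 2 * exp (2 * U r (ξθ s))
              + r ^ 2 * exp (-(2 * U r (ξθ s)))) (ξR s) * (deriv ξY s) ^ 2))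
    (hgeo : ∀ s ∈ Set.Ioo s₀ s₁,
      deriv (fun u => deriv ξR u) s
        = -((pdR η (ξR s) (ξθ s) - pdR U (ξR s) (ξθ s))
              * ((deriv ξR s) ^ 2 + (deriv ξθ s) ^ 2))
          - 2 * (pdT η (ξR s) (ξθ s) - pdT U (ξR s) (ξθ s)) * deriv ξR s * deriv ξθ s
          + T s) :
    ∀ s ∈ Set.Ioo s₀ s₁, ∃ d : ℝ,
      HasDerivAt (fun u => deriv ξR u / Real.sqrt (ξR u)) d s
        ∧ d ≤ T s / Real.sqrt (ξR s) := by
  intro s hsI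
  have hR : 0 < ξR s := lt_of_lt_of_le hR₀ (hdom s hsI)
  have hnhds : Set.Ioo s₀ s₁ ∈ nhds s := isOpen_Ioo.mem_nhds hsI
  have hd1 : HasDerivAt ξR (deriv ξR s) s :=
    ((hξR.contDiffAt hnhds).differentiableAt (by norm_num)).hasDerivAt
  have hC1 : ContDiffOn ℝ 1 (deriv ξR) (Set.Ioo s₀ s₁) :=
    hξR.deriv_of_isOpen isOpen_Ioo (by norm_num)
  have hd2 : HasDerivAt (deriv ξR) (deriv (fun u => deriv ξR u) s) s :=
    ((hC1.contDiffAt hnhds).differentiableAt (by norm_num)).hasDerivAt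
  have hsq : 0 < Real.sqrt (ξR s) := Real.sqrt_pos.mpr hR
  have hss : Real.sqrt (ξR s) ^ 2 = ξR s := Real.sq_sqrt hR.le
  refine ⟨_, hd2.div (hd1.sqrt hR.ne') hsq.ne', ?_⟩
  have key : deriv (fun u => deriv ξR u) s - T s ≤ (deriv ξR s) ^ 2 / (2 * ξR s) := by
    rw [hgeo s hsI, conηR _ (hdom s hsI), conηT _ (hdom s hsI)]
    have hq : (deriv ξθ s) ^ 2 ≤ (deriv ξR s) ^ 2 :=
      sq_le_sq' (by linarith [(abs_le.mp (htl s hsI)).1]) (abs_le.mp (htl s hsI)).2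
    have hE : 0 < exp (4 * U (ξR s) (ξθ s)) := exp_pos _
    generalize exp (4 * U (ξR s) (ξθ s)) = E at *
    generalize pdR U (ξR s) (ξθ s) = u
    generalize pdT U (ξR s) (ξθ s) = v
    generalize pdR A (ξR s) (ξθ s) = a
    generalize pdT A (ξR s) (ξθ s) = b
    generalize deriv ξR s = p at *
    generalize deriv ξθ s = q at *
    generalize ξR s = R at *
    have hid : p ^ 2 / (2 * R) - (-((R * (u ^ 2 + v ^ 2 + E / (4 * R ^ 2) * (a ^ 2 + b ^ 2)) - u)
          * (p ^ 2 + q ^ 2))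
        - 2 * (R * (2 * u * v + E / (2 * R ^ 2) * (a * b)) - v) * p * q + T s - T s)
        = R * ((u * p + v * q - p / (2 * R)) ^ 2 + (u * q + v * p - q / (2 * R)) ^ 2)
          + E / (4 * R) * ((a * p + b * q) ^ 2 + (a * q + b * p) ^ 2)
          + (p ^ 2 - q ^ 2) / (4 * R) := by
      field_simp
      ring
    have h3 : 0 ≤ (p ^ 2 - q ^ 2) / (4 * R) := div_nonneg (by linarith) (by linarith)
    have h4 : 0 ≤ R * ((u * p + v * q - p / (2 * R)) ^ 2 + (u * q + v * p - q / (2 * R)) ^ 2)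
          + E / (4 * R) * ((a * p + b * q) ^ 2 + (a * q + b * p) ^ 2) := by positivity
    linarith
  generalize deriv (fun u => deriv ξR u) s = D at *
  have h5 : (D * Real.sqrt (ξR s) - deriv ξR s * (deriv ξR s / (2 * Real.sqrt (ξR s))))
      / Real.sqrt (ξR s) ^ 2
      = (D - (deriv ξR s) ^ 2 / (2 * Real.sqrt (ξR s) ^ 2)) / Real.sqrt (ξR s) := by
    field_simp
  rw [h5, hss]
  exact div_le_div_of_nonneg_right (by linarith) hsq.le
end

section
/- Let K > 0, J_X, J_Y ∈ ℝ, and let ξ = (ξ^R, ξ^θ, ξ^X, ξ^Y) : (s₀,s₁) → ℝ⁴ be a C¹ curve with ξ^R(s) ≥ R₀ and ξ̇^R(s) > 0 for all s, satisfying for all s: (i) e^{2ρ(ξ^R,ξ^θ)} ( −(ξ̇^R)² + (ξ̇^θ)² ) + e^{2U(ξ^R,ξ^θ)} ( ξ̇^X + A(ξ^R,ξ^θ) ξ̇^Y )² + e^{−2U(ξ^R,ξ^θ)} (ξ^R)² (ξ̇^Y)² = −K²; (ii) e^{2U(ξ^R,ξ^θ)} ( ξ̇^X + A(ξ^R,ξ^θ)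 ξ̇^Y ) = J_X; (iii) A(ξ^R,ξ^θ) e^{2U(ξ^R,ξ^θ)} ( ξ̇^X + A(ξ^R,ξ^θ) ξ̇^Y ) + e^{−2U(ξ^R,ξ^θ)} (ξ^R)² ξ̇^Y = J_Y. Then for all s ∈ (s₀,s₁): 0 ≤ (∂_R μ)(ξ^R(s),ξ^θ(s)) ≤ [ 2 ξ̇^R(s) e^{2ρ(ξ^R(s),ξ^θ(s))} / ( K² + J_X² e^{−2U(ξ^R(s),ξ^θ(s))} + (J_Y − A(ξ^R(s),ξ^θ(s)) J_X)² e^{2U(ξ^R(s),ξ^θ(s))} (ξ^R(s))^{−2} ) ] · (d/ds)( μ(ξ^R(s),ξ^θ(s)) ), and in particular (∂_R μ)(ξ^R(s),ξ^θ(s)) ≤ 2 K^{−2} e^{2ρ(ξ^R(s),ξ^θ(s))} ξ̇^R(s) (d/ds)( μ(ξ^R(s),ξ^θ(s)) ). -/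
open Real MeasureTheory Set

lemma aux_chain (f : ℝ → ℝ → ℝ) (hf : ContDiff ℝ (⊤ : ℕ∞) (Function.uncurry f))
    (x y : ℝ → ℝ) (s p q : ℝ) (hx : HasDerivAt x p s) (hy : HasDerivAt y q s) :
    HasDerivAt (fun u => f (x u) (y u)) (pdR f (x s) (y s) * p + pdT f (x s) (y s) * q) s := by
  have hd : HasFDerivAt (Function.uncurry f) (fderiv ℝ (Function.uncurry f) (x s, y s)) (x s, y s) :=
    ((hf.differentiable (by simp)) _).hasFDerivAt
  have h1 : HasDerivAt (fun r => f r (y s)) (fderiv ℝ (Function.uncurry f) (x s, y s) (1, 0)) (x s) :=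
    HasFDerivAt.comp_hasDerivAt (x s) (f := fun r => (r, y s)) hd
      ((hasDerivAt_id (x s)).prodMk (hasDerivAt_const (x s) (y s)))
  have h2 : HasDerivAt (fun t => f (x s) t) (fderiv ℝ (Function.uncurry f) (x s, y s) (0, 1)) (y s) :=
    HasFDerivAt.comp_hasDerivAt (y s) (f := fun t => (x s, t)) hd
      ((hasDerivAt_const (y s) (x s)).prodMk (hasDerivAt_id (y s)))
  have h3 : HasDerivAt (fun u => f (x u) (y u)) (fderiv ℝ (Function.uncurry f) (x s, y s) (p, q)) s :=
    HasFDerivAt.comp_hasDerivAt s (f := fun u => (x u, y u)) hd (hx.prodMk hy)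
  have e1 : pdR f (x s) (y s) = fderiv ℝ (Function.uncurry f) (x s, y s) (1, 0) := h1.deriv
  have e2 : pdT f (x s) (y s) = fderiv ℝ (Function.uncurry f) (x s, y s) (0, 1) := h2.deriv
  have e3 : ((p, q) : ℝ × ℝ) = p • (1, 0) + q • (0, 1) := by simp
  rw [e3, map_add, map_smul, map_smul, ← e1, ← e2] at h3
  convert h3 using 1
  simp [mul_comm]

lemma aux_alg (M N p q E D K : ℝ) (hNM : |N| ≤ M) (hp : 0 < p) (hE : 0 < E) (hK : 0 < K)
    (hKD : K ^ 2 ≤ D) (h : E * (p ^ 2 - q ^ 2) = D) :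
    M ≤ 2 * p * E / D * (M * p + N * q) ∧ M ≤ 2 * K⁻¹ ^ 2 * E * p * (M * p + N * q) := by
  have hK2 : 0 < K ^ 2 := by positivity
  have hD : 0 < D := by linarith
  have hM : 0 ≤ M := (abs_nonneg _).trans hNM
  have hpq : 0 < p ^ 2 - q ^ 2 := by
    by_contra hc
    nlinarith
  have hq : |q| < p := abs_lt_of_sq_lt_sq (by linarith) hp.le
  have h1 : M * (p - |q|) ≤ M * p + N * q := by
    have : -(N * q) ≤ M * |q| := by
      calc -(N * q) ≤ |N * q| := neg_le_abs _
        _ = |N| * |q| := abs_mul _ _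
        _ ≤ _ := by gcongr
    linarith
  have hW : 0 ≤ M * p + N * q := le_trans (mul_nonneg hM (by linarith)) h1
  have h2 : M * D ≤ 2 * p * E * (M * p + N * q) := by
    have h3 : M * (p ^ 2 - q ^ 2) ≤ 2 * p * (M * p + N * q) := by
      calc M * (p ^ 2 - q ^ 2) = (p + |q|) * (M * (p - |q|)) := by
            rw [← sq_abs q]; ring
        _ ≤ (2 * p) * (M * p + N * q) := by
            apply mul_le_mul (by linarith) h1 (mul_nonneg hM (by linarith)) (by linarith)
    rw [← h]
    calc M * (E * (p ^ 2 - q ^ 2)) = E * (M * (p ^ 2 - q ^ 2)) := by ring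
      _ ≤ E * (2 * p * (M * p + N * q)) := by gcongr
      _ = _ := by ring
  constructor
  · rw [div_mul_eq_mul_div, le_div_iff₀ hD]; exact h2
  · have : 2 * K⁻¹ ^ 2 * E * p * (M * p + N * q) = 2 * p * E * (M * p + N * q) / K ^ 2 := by
      field_simp
    rw [this, le_div_iff₀ hK2]
    exact le_trans (mul_le_mul_of_nonneg_left hKD hM) h2

theorem stmt18
    (R₀ : ℝ) (hR₀ : 0 < R₀)
    (U A : ℝ → ℝ → ℝ)
    (hU : ContDiff ℝ (⊤ : ℕ∞) (Function.uncurry U))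
    (hA : ContDiff ℝ (⊤ : ℕ∞) (Function.uncurry A))
    (hUper : ∀ R θ, U R (θ + 2 * π) = U R θ)
    (hAper : ∀ R θ, A R (θ + 2 * π) = A R θ)
    (η : ℝ → ℝ → ℝ)
    (hη : ContDiff ℝ (⊤ : ℕ∞) (Function.uncurry η))
    (hηper : ∀ R θ, η R (θ + 2 * π) = η R θ)
    (conηR : ∀ R, R₀ ≤ R → ∀ θ : ℝ,
      pdR η R θ = R * ((pdR U R θ) ^ 2 + (pdT U R θ) ^ 2
        + exp (4 * U R θ) / (4 * R ^ 2) * ((pdR A R θ) ^ 2 + (pdT A R θ) ^ 2)))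
    (conηT : ∀ R, R₀ ≤ R → ∀ θ : ℝ,
      pdT η R θ = R * (2 * pdR U R θ * pdT U R θ
        + exp (4 * U R θ) / (2 * R ^ 2) * (pdR A R θ * pdT A R θ)))
    (K JX JY : ℝ) (hK : 0 < K)
    (s₀ s₁ : ℝ) (hs : s₀ < s₁)
    (ξR ξθ ξX ξY : ℝ → ℝ)
    (hξR : ContDiffOn ℝ 1 ξR (Set.Ioo s₀ s₁))
    (hξθ : ContDiffOn ℝ 1 ξθ (Set.Ioo s₀ s₁))
    (hξX : ContDiffOn ℝ 1 ξX (Set.Ioo s₀ s₁))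
    (hξY : ContDiffOn ℝ 1 ξY (Set.Ioo s₀ s₁))
    (hdom : ∀ s ∈ Set.Ioo s₀ s₁, R₀ ≤ ξR s)
    (hfut : ∀ s ∈ Set.Ioo s₀ s₁, 0 < deriv ξR s)
    (hnorm : ∀ s ∈ Set.Ioo s₀ s₁,
      exp (2 * (η (ξR s) (ξθ s) - U (ξR s) (ξθ s)))
          * (-(deriv ξR s) ^ 2 + (deriv ξθ s) ^ 2)
        + exp (2 * U (ξR s) (ξθ s))
          * (deriv ξX s + A (ξR s) (ξθ s) * deriv ξY s) ^ 2
        + exp (-(2 * U (ξR s) (ξθ s))) * (ξR s) ^ 2 * (deriv ξY s) ^ 2 = -K ^ 2)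
    (hJX : ∀ s ∈ Set.Ioo s₀ s₁,
      exp (2 * U (ξR s) (ξθ s))
        * (deriv ξX s + A (ξR s) (ξθ s) * deriv ξY s) = JX)
    (hJY : ∀ s ∈ Set.Ioo s₀ s₁,
      A (ξR s) (ξθ s) * exp (2 * U (ξR s) (ξθ s))
          * (deriv ξX s + A (ξR s) (ξθ s) * deriv ξY s)
        + exp (-(2 * U (ξR s) (ξθ s))) * (ξR s) ^ 2 * deriv ξY s = JY) :
    ∀ s ∈ Set.Ioo s₀ s₁,
      0 ≤ pdR (fun r t => η r t - U r t + 4⁻¹ * Real.log r) (ξR s) (ξθ s)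
      ∧ pdR (fun r t => η r t - U r t + 4⁻¹ * Real.log r) (ξR s) (ξθ s)
          ≤ 2 * deriv ξR s * exp (2 * (η (ξR s) (ξθ s) - U (ξR s) (ξθ s)))
              / (K ^ 2 + JX ^ 2 * exp (-(2 * U (ξR s) (ξθ s)))
                + (JY - A (ξR s) (ξθ s) * JX) ^ 2
                    * exp (2 * U (ξR s) (ξθ s)) / (ξR s) ^ 2)
            * deriv (fun u => η (ξR u) (ξθ u) - U (ξR u) (ξθ u)
                + 4⁻¹ * Real.log (ξR u)) s
      ∧ pdR (fun r t => η r t - U r t + 4⁻¹ * Real.log r) (ξR s) (ξθ s)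
          ≤ 2 * K⁻¹ ^ 2 * exp (2 * (η (ξR s) (ξθ s) - U (ξR s) (ξθ s)))
            * deriv ξR s
            * deriv (fun u => η (ξR u) (ξθ u) - U (ξR u) (ξθ u)
                + 4⁻¹ * Real.log (ξR u)) s := by
  intro s hsm
  have hR : 0 < ξR s := lt_of_lt_of_le hR₀ (hdom s hsm)
  have hnb := isOpen_Ioo.mem_nhds hsm
  have hx : HasDerivAt ξR (deriv ξR s) s :=
    ((hξR.contDiffAt hnb).differentiableAt (by simp)).hasDerivAt
  have hy : HasDerivAt ξθ (deriv ξθ s) s :=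
    ((hξθ.contDiffAt hnb).differentiableAt (by simp)).hasDerivAt
  have hder := (((aux_chain η hη ξR ξθ s _ _ hx hy).sub (aux_chain U hU ξR ξθ s _ _ hx hy)).add
    ((hx.log hR.ne').const_mul (4⁻¹ : ℝ))).deriv
  have hid := hasDerivAt_id (ξR s)
  have hcst := hasDerivAt_const (ξR s) (ξθ s)
  have hder2 := (((aux_chain η hη id (fun _ => ξθ s) (ξR s) _ _ hid hcst).sub
    (aux_chain U hU id (fun _ => ξθ s) (ξR s) _ _ hid hcst)).add
    ((hid.log hR.ne').const_mul (4⁻¹ : ℝ))).deriv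
  have hM : pdR (fun r t => η r t - U r t + 4⁻¹ * Real.log r) (ξR s) (ξθ s)
      = pdR η (ξR s) (ξθ s) - pdR U (ξR s) (ξθ s) + 4⁻¹ * (1 / ξR s) := by
    refine Eq.trans hder2 ?_
    simp
  have hD : deriv (fun u => η (ξR u) (ξθ u) - U (ξR u) (ξθ u) + 4⁻¹ * Real.log (ξR u)) s
      = (pdR η (ξR s) (ξθ s) - pdR U (ξR s) (ξθ s) + 4⁻¹ * (1 / ξR s)) * deriv ξR s
        + (pdT η (ξR s) (ξθ s) - pdT U (ξR s) (ξθ s)) * deriv ξθ s := by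
    refine Eq.trans hder ?_
    ring
  rw [hM, hD]
  have c1 := conηR _ (hdom s hsm) (ξθ s)
  have c2 := conηT _ (hdom s hsm) (ξθ s)
  have n1 := hnorm s hsm
  have n2 := hJX s hsm
  have n3 := hJY s hsm
  have hp := hfut s hsm
  have huv : exp (2 * U (ξR s) (ξθ s)) * exp (-(2 * U (ξR s) (ξθ s))) = 1 := by
    rw [← Real.exp_add]; simp
  have hNM : |pdT η (ξR s) (ξθ s) - pdT U (ξR s) (ξθ s)|
      ≤ pdR η (ξR s) (ξθ s) - pdR U (ξR s) (ξθ s) + 4⁻¹ * (1 / ξR s) := by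
    rw [c1, c2]
    generalize pdR U (ξR s) (ξθ s) = a
    generalize pdT U (ξR s) (ξθ s) = b
    generalize pdR A (ξR s) (ξθ s) = c
    generalize pdT A (ξR s) (ξθ s) = d
    have hF : 0 < exp (4 * U (ξR s) (ξθ s)) := exp_pos _
    generalize exp (4 * U (ξR s) (ξθ s)) = F at hF ⊢
    generalize ξR s = R at hR ⊢
    have hpos : 0 ≤ R * (a - 1 / (2 * R) + b) ^ 2 + R * (F / (4 * R ^ 2)) * (c + d) ^ 2 := by
      positivity
    have hneg : 0 ≤ R * (a - 1 / (2 * R) - b) ^ 2 + R * (F / (4 * R ^ 2)) * (c - d) ^ 2 := by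
      positivity
    rw [abs_le]
    constructor
    · rw [← sub_nonneg]
      refine le_of_le_of_eq hpos ?_
      field_simp
      ring
    · rw [← sub_nonneg]
      refine le_of_le_of_eq hneg ?_
      field_simp
      ring
  refine ⟨(abs_nonneg _).trans hNM, ?_⟩
  have hu : 0 < exp (2 * U (ξR s) (ξθ s)) := exp_pos _
  have hv : 0 < exp (-(2 * U (ξR s) (ξθ s))) := exp_pos _
  refine aux_alg _ _ _ _ _ _ _ hNM hp (exp_pos _) hK ?_ ?_
  · have : 0 ≤ JX ^ 2 * exp (-(2 * U (ξR s) (ξθ s))) := by positivity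
    have : 0 ≤ (JY - A (ξR s) (ξθ s) * JX) ^ 2 * exp (2 * U (ξR s) (ξθ s)) / (ξR s) ^ 2 := by
      positivity
    linarith
  · generalize exp (2 * U (ξR s) (ξθ s)) = u at *
    generalize exp (-(2 * U (ξR s) (ξθ s))) = v at *
    have e1 : JX ^ 2 * v = u * (deriv ξX s + A (ξR s) (ξθ s) * deriv ξY s) ^ 2 := by
      rw [← n2]
      linear_combination u * (deriv ξX s + A (ξR s) (ξθ s) * deriv ξY s) ^ 2 * huv
    have e2 : JY - A (ξR s) (ξθ s) * JX = v * ξR s ^ 2 * deriv ξY s := by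
      rw [← n3, ← n2]; ring
    have e3 : (JY - A (ξR s) (ξθ s) * JX) ^ 2 * u / (ξR s) ^ 2
        = v * ξR s ^ 2 * deriv ξY s ^ 2 := by
      rw [e2, div_eq_iff (by positivity)]
      linear_combination v * ξR s ^ 4 * deriv ξY s ^ 2 * huv
    rw [e1, e3]
    linarith
end
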